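/- arXiv:1201.0514 — 3 statements merged into one kernel-verified Lean document; each statement's English description precedes it below -/
import Mathlib

section
/- Fix n ≥ 1, an additive Haar measure μ on the real vector space Sym_n(ℝ) of n×n real symmetric matrices, a real η > n−1, an n×n real symmetric positive definite matrix Σ, and an n×n real symmetric matrix z such that Σ⁻¹ + 2z is positive definite. Then the integrals ∫ exp(−tr(z·x)) w_{η,Σ}(x) dμ(x) and ∫ w_{η,Σ}(x) dμ(x) are finite and positive, and ∫ exp(−tr(z·x)) w_{η,Σ}(x) dμ(x) = det(1 + 2·Σ·z)^{−η/2} · ∫ w_{η,Σ}(x) dμ(x), where the power is a real power of the positive real number det(1 + 2·Σ·z). -/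
open MeasureTheory
open scoped ENNReal Matrix

instance matrixMeasurableSpace {m n α : Type*} [MeasurableSpace α] :
    MeasurableSpace (Matrix m n α) := by unfold Matrix; infer_instance

/-- The real vector space `Sym_n(ℝ)` of `n × n` real symmetric matrices,
as a submodule of the matrix space. -/
def symMatSubmodule (n : ℕ) : Submodule ℝ (Matrix (Fin n) (Fin n) ℝ) where
  carrier := {x | x.IsSymm}
  add_mem' := fun {a b} ha hb => by
    have ha' : aᵀ = a := ha
    have hb' : bᵀ = b := hb
    show (a + b)ᵀ = a + b
    rw [Matrix.transpose_add, ha', hb']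
  zero_mem' := Matrix.transpose_zero
  smul_mem' := fun c a ha => by
    have ha' : aᵀ = a := ha
    show (c • a)ᵀ = c • a
    rw [Matrix.transpose_smul, ha']

/-- `SymMat n` : the type of `n × n` real symmetric matrices. -/
abbrev SymMat (n : ℕ) : Type := ↥(symMatSubmodule n)

open Classical in
/-- The (unnormalized) Wishart density with shape `η` and scale `S` on `Sym_n(ℝ)`:
`exp(−tr(S⁻¹x)/2)·det(x)^{η/2−(n+1)/2}` on positive definite `x`, `0` elsewhere. -/
noncomputable def wishartDensity (n : ℕ) (η : ℝ) (S : Matrix (Fin n) (Fin n) ℝ)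
    (x : SymMat n) : ℝ :=
  if (x : Matrix (Fin n) (Fin n) ℝ).PosDef then
    Real.exp (-(S⁻¹ * (x : Matrix (Fin n) (Fin n) ℝ)).trace / 2) *
      (x : Matrix (Fin n) (Fin n) ℝ).det ^ (η / 2 - ((n : ℝ) + 1) / 2)
  else 0

/-
A positive definite `A` is `Bᵀ * B`, and `x ↦ B * x * Bᵀ` is a linear automorphism of `Sym_n(ℝ)` of
determinant `det B ^ (n + 1)`. Hence the integral of `exp (-tr(A x)) * det x ^ s` over the cone is
`det A ^ (-(s + (n + 1) / 2))` times its value at `A = 1`. Multiplying a Wishart density by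
`exp (-tr(z x))` only replaces `A = S⁻¹ / 2` by `z + A = A * (1 + 2 S z)`.

That the integral at `A = 1` is finite and positive follows by induction on the matrix size: in
terms of the corner `a`, the rest `b` of the first row and the Schur complement of `a`, the
integrand is the product of `exp (-a) * a ^ s * exp (-‖b‖² / a)`, which leads to a Gaussian integral
in `b` and then to a Gamma integral in `a`, with the integrand one size down.
-/

section Matrix

open Matrix

lemma diagonal_mul_transvection {ι R : Type*} [Fintype ι] [DecidableEq ι] [CommRing R]
    (d : ι → R) (i j : ι) (c : R) :
    diagonal d * transvection i j (c * d j) = transvection i j (d i * c) * diagonal d := by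
  ext k l
  simp only [transvection, diagonal_mul, mul_diagonal, Matrix.add_apply, one_apply, single_apply]
  grind

section MonoidHom

variable {ι K M : Type*} [Fintype ι] [DecidableEq ι] [Field K] [Nontrivial Kˣ] [CommMonoid M]

/- Conjugation by a diagonal matrix rescales a transvection, so every transvection is a commutator
as soon as `K` has a unit other than `1`. -/
lemma map_transvection_eq_one (f : Matrix ι ι K →* M) {i j : ι} (hij : i ≠ j) (c : K) :
    f (transvection i j c) = 1 := by
  have isUnit_transvection (c : K) : IsUnit (transvection i j c) :=
    (isUnit_iff_isUnit_det _).mpr (by simp [det_transvection_of_ne _ _ hij])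
  obtain ⟨u, hu⟩ := exists_ne (1 : Kˣ)
  have hu' : (u : K) - 1 ≠ 0 := sub_ne_zero.mpr (by simpa using hu)
  let d : ι → K := Function.update 1 i u
  have isUnit_diagonal : IsUnit (diagonal d) :=
    (isUnit_iff_isUnit_det _).mpr (by simp [d, Finset.prod_update_of_mem])
  let t : K := ((u : K) - 1)⁻¹ * c
  have conj : diagonal d * transvection i j t = transvection i j (u * t) * diagonal d := by
    simpa [d, hij.symm] using diagonal_mul_transvection d i j t
  have map_eq : f (transvection i j (u * t)) = f (transvection i j t) := by
    refine (isUnit_diagonal.map f).mul_right_cancel ?_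
    rw [← map_mul, ← conj, map_mul, mul_comm]
  have split : transvection i j (u * t) = transvection i j c * transvection i j t := by
    have : u * t = c + t := by linear_combination mul_inv_cancel_left₀ hu' c
    rw [transvection_mul_transvection_same _ _ hij, this]
  refine ((isUnit_transvection t).map f).mul_right_cancel ?_
  rw [← map_mul, ← split, map_eq, one_mul]

lemma monoidHom_ext_of_diagonal {f g : Matrix ι ι K →* M}
    (h : ∀ d, f (diagonal d) = g (diagonal d)) : f = g := by
  ext A
  induction A using diagonal_transvection_induction with
  | hdiag d _ => exact h d
  | htransvec t =>
    rw [TransvectionStruct.toMatrix, map_transvection_eq_one f t.hij,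
      map_transvection_eq_one g t.hij]
  | hmul A B hA hB => rw [map_mul, map_mul, hA, hB]

end MonoidHom

lemma posDef_submatrix_equiv_iff {m n R : Type*} [Ring R] [PartialOrder R] [StarRing R]
    {M : Matrix n n R} (e : m ≃ n) : (M.submatrix e e).PosDef ↔ M.PosDef :=
  ⟨fun h => by simpa using h.submatrix e.symm.injective, fun h => h.submatrix e.injective⟩

open scoped ComplexOrder in
lemma posDef_fromBlocks_iff_posDef_schurComplement {m n 𝕜 : Type*} [Fintype m] [DecidableEq m]
    [Finite n] [RCLike 𝕜] {A : Matrix m m 𝕜} (hA : A.PosDef) (B : Matrix m n 𝕜)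
    (D : Matrix n n 𝕜) :
    (fromBlocks A B Bᴴ D).PosDef ↔ (D - Bᴴ * A⁻¹ * B).PosDef := by
  classical
  have := Fintype.ofFinite n
  have : Invertible A := hA.isUnit.invertible
  have posSemidef_iff := PosDef.fromBlocks₁₁ B D hA
  have det_ne_zero_iff : (fromBlocks A B Bᴴ D).det ≠ 0 ↔ (D - Bᴴ * A⁻¹ * B).det ≠ 0 := by
    simp [det_fromBlocks₁₁, invOf_eq_nonsing_inv, hA.det_pos.ne']
  constructor <;> intro h
  · exact (posSemidef_iff.mp h.posSemidef).posDef_iff_det_ne_zero.mpr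
      (det_ne_zero_iff.mp h.det_pos.ne')
  · exact (posSemidef_iff.mpr h.posSemidef).posDef_iff_det_ne_zero.mpr
      (det_ne_zero_iff.mpr h.det_pos.ne')

open scoped MatrixOrder in
lemma exists_isUnit_eq_transpose_mul_self {n : Type*} [Fintype n] [DecidableEq n]
    {A : Matrix n n ℝ} (hA : A.PosDef) : ∃ B, IsUnit B ∧ A = Bᵀ * B := by
  simpa [star_eq_conjTranspose, conjTranspose_eq_transpose_of_trivial] using
    CStarAlgebra.isStrictlyPositive_iff_eq_star_mul_self.mp hA.isStrictlyPositive

end Matrix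

section Haar

variable {E F : Type*} [AddCommGroup E] [Module ℝ E] [TopologicalSpace E] [IsTopologicalAddGroup E]
  [ContinuousSMul ℝ E] [T2Space E] [FiniteDimensional ℝ E] [MeasurableSpace E] [BorelSpace E]
  [NormedAddCommGroup F] {μ : Measure E} [μ.IsAddHaarMeasure] {f : E →ₗ[ℝ] E} {g : E → F}

lemma measurableEmbedding_linearMap (hf : LinearMap.det f ≠ 0) : MeasurableEmbedding f := by
  have ker_eq : LinearMap.ker f = ⊥ := by
    by_contra h
    exact hf (LinearMap.det_eq_zero_iff_ker_ne_bot.mpr h)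
  exact (LinearMap.isClosedEmbedding_of_injective ker_eq).measurableEmbedding

lemma map_linearMap_addHaar_of_finiteDimensional (hf : LinearMap.det f ≠ 0) :
    μ.map f = ENNReal.ofReal |(LinearMap.det f)⁻¹| • μ := by
  let e := (Module.finBasis ℝ E).equivFunL
  let f' := e.toLinearMap ∘ₗ f ∘ₗ e.symm.toLinearMap
  have det_eq : LinearMap.det f' = LinearMap.det f := LinearMap.det_conj f e.toLinearEquiv
  have he : Measurable e := e.continuous.measurable
  have he' : Measurable e.symm := e.symm.continuous.measurable
  have hf' : Measurable f' := f'.continuous_of_finiteDimensional.measurable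
  have : (μ.map e).IsAddHaarMeasure := e.isAddHaarMeasure_map μ
  calc μ.map f = ((μ.map e).map f').map e.symm := by
        rw [Measure.map_map hf' he, Measure.map_map he' (hf'.comp he)]
        congr 1
        ext x
        simp [f']
    _ = ENNReal.ofReal |(LinearMap.det f)⁻¹| • (μ.map e).map e.symm := by
        rw [Measure.map_linearMap_addHaar_pi_eq_smul_addHaar (det_eq ▸ hf), det_eq,
          Measure.map_smul]
    _ = ENNReal.ofReal |(LinearMap.det f)⁻¹| • μ := by
        rw [Measure.map_map he' he, e.symm_comp_self, Measure.map_id]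

lemma integrable_comp_linearMap (hf : LinearMap.det f ≠ 0) (hg : Integrable g μ) :
    Integrable (fun x => g (f x)) μ := by
  refine (measurableEmbedding_linearMap hf).integrable_map_iff.mp ?_
  rw [map_linearMap_addHaar_of_finiteDimensional hf]
  exact hg.smul_measure ENNReal.ofReal_ne_top

lemma integral_comp_linearMap [NormedSpace ℝ F] (hf : LinearMap.det f ≠ 0) (g : E → F) :
    ∫ x, g (f x) ∂μ = |(LinearMap.det f)⁻¹| • ∫ x, g x ∂μ := by
  rw [← (measurableEmbedding_linearMap hf).integral_map,
    map_linearMap_addHaar_of_finiteDimensional hf, integral_smul_measure,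
    ENNReal.toReal_ofReal (abs_nonneg _)]

end Haar

instance {m n R : Type*} [Countable m] [Countable n] [TopologicalSpace R]
    [SecondCountableTopology R] : SecondCountableTopology (Matrix m n R) :=
  inferInstanceAs (SecondCountableTopology (m → n → R))

instance {m n R : Type*} [Countable m] [Countable n] [TopologicalSpace R]
    [SecondCountableTopology R] [MeasurableSpace R] [BorelSpace R] : BorelSpace (Matrix m n R) :=
  inferInstanceAs (BorelSpace (m → n → R))

namespace SymMat

open Matrix

variable {n : ℕ}

instance : SecondCountableTopology (SymMat n) :=
  Topology.IsEmbedding.subtypeVal.secondCountableTopology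

instance : LocallyCompactSpace (SymMat n) :=
  LocallyCompactSpace.of_finiteDimensional_of_complete ℝ _

/-- The action `B ↦ (x ↦ B x Bᵀ)` of matrices on symmetric matrices by congruence. -/
def congruence : Matrix (Fin n) (Fin n) ℝ →* Module.End ℝ (SymMat n) where
  toFun B :=
    { toFun x := ⟨B * x.1 * Bᵀ, by
        have hx : x.1.IsSymm := x.2
        simp [symMatSubmodule, IsSymm, transpose_mul, hx.eq, Matrix.mul_assoc]⟩
      map_add' x y := by
        ext1
        simp [Matrix.mul_add, Matrix.add_mul]
      map_smul' c x := by
        ext1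
        simp }
  map_one' := by
    ext1 x
    ext1
    simp
  map_mul' A B := by
    ext1 x
    ext1
    simp [Matrix.mul_assoc]

@[simp]
lemma coe_congruence (B : Matrix (Fin n) (Fin n) ℝ) (x : SymMat n) :
    (congruence B x).1 = B * x.1 * Bᵀ := rfl

/-- The symmetric matrix `!![a, bᵀ; b, C]` as a linear function of `((a, b), C)`: block coordinates
on `SymMat (n + 1)` that split off the first row. -/
def bordered : ((ℝ × (Fin n → ℝ)) × SymMat n) ≃ₗ[ℝ] SymMat (n + 1) where
  toFun p := ⟨of (vecCons (vecCons p.1.1 p.1.2) fun i => vecCons (p.1.2 i) (p.2.1 i)), by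
    ext i j
    cases i using Fin.cases <;> cases j using Fin.cases <;> simp [p.2.2.apply]⟩
  map_add' p q := by
    ext i j
    cases i using Fin.cases <;> cases j using Fin.cases <;> simp
  map_smul' c p := by
    ext i j
    cases i using Fin.cases <;> cases j using Fin.cases <;> simp
  invFun x := ((x.1 0 0, fun j => x.1 0 j.succ), ⟨x.1.submatrix Fin.succ Fin.succ, x.2.submatrix _⟩)
  left_inv p := by
    ext <;> simp
  right_inv x := by
    ext i j
    cases i using Fin.cases <;> cases j using Fin.cases <;> simp [x.2.apply]

lemma submatrix_coe_bordered (p : ℝ × (Fin n → ℝ)) (C : SymMat n) :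
    ∃ e : Fin 1 ⊕ Fin n ≃ Fin (n + 1), (bordered (p, C)).1.submatrix e e =
      fromBlocks (diagonal fun _ => p.1) (replicateRow (Fin 1) p.2) (replicateRow (Fin 1) p.2)ᴴ
        C.1 := by
  let e : Fin 1 ⊕ Fin n ≃ Fin (n + 1) := finSumFinEquiv.trans (finCongr (add_comm 1 n))
  have e_inl (i : Fin 1) : e (.inl i) = 0 := by ext; simp [e]
  have e_inr (i : Fin n) : e (.inr i) = i.succ := by ext; simp [e]
  refine ⟨e, ?_⟩
  ext i j
  rcases i with i | i <;> rcases j with j | j <;>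
    simp [bordered, e_inl, e_inr, diagonal, Fin.fin_one_eq_zero]

lemma congruence_diagonal_bordered (d : Fin (n + 1) → ℝ) (p : (ℝ × (Fin n → ℝ)) × SymMat n) :
    congruence (diagonal d) (bordered p) =
      bordered ((d 0 ^ 2 * p.1.1, d 0 • diagonal (Fin.tail d) *ᵥ p.1.2),
        congruence (diagonal (Fin.tail d)) p.2) := by
  ext i j
  cases i using Fin.cases <;> cases j using Fin.cases <;>
    simp [bordered, Fin.tail, mulVec_diagonal] <;> ring

lemma det_congruence_diagonal (d : Fin n → ℝ) :
    LinearMap.det (congruence (diagonal d)) = (∏ i, d i) ^ (n + 1) := by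
  induction n with
  | zero => simp [LinearMap.det_eq_one_of_subsingleton]
  | succ n ih =>
    have conj : bordered.symm.toLinearMap ∘ₗ congruence (diagonal d) ∘ₗ bordered.toLinearMap =
        ((d 0 ^ 2 • LinearMap.id).prodMap (toLin' (d 0 • diagonal (Fin.tail d)))).prodMap
          (congruence (diagonal (Fin.tail d))) := by
      refine LinearMap.ext fun p => bordered.injective ?_
      simp [congruence_diagonal_bordered]
    rw [← LinearMap.det_conj _ bordered.symm]
    change LinearMap.det (bordered.symm.toLinearMap ∘ₗ _ ∘ₗ bordered.toLinearMap) = _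
    rw [conj, LinearMap.det_prodMap, LinearMap.det_prodMap, ih, LinearMap.det_toLin',
      LinearMap.det_smul, LinearMap.det_id, Matrix.det_smul, Fin.prod_univ_succ]
    simp [Fin.tail]
    ring

lemma det_congruence (B : Matrix (Fin n) (Fin n) ℝ) :
    LinearMap.det (congruence B) = B.det ^ (n + 1) := by
  have : Nontrivial ℝˣ := ⟨1, -1, by simp [Units.ext_iff]; norm_num⟩
  have key : LinearMap.det.comp congruence =
      (powMonoidHom (n + 1)).comp (detMonoidHom : Matrix (Fin n) (Fin n) ℝ →* ℝ) :=
    monoidHom_ext_of_diagonal fun d => by simp [det_congruence_diagonal, Finset.prod_pow]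
  exact DFunLike.congr_fun key B

lemma det_congruence_ne_zero {B : Matrix (Fin n) (Fin n) ℝ} (hB : IsUnit B) :
    LinearMap.det (congruence B) ≠ 0 := by
  rw [det_congruence]
  exact pow_ne_zero _ ((isUnit_iff_isUnit_det B).mp hB).ne_zero

/-- The Schur complement `C - a⁻¹ b bᵀ` of the corner `a` of the bordered matrix `!![a, bᵀ; b, C]`,
for `p = (a, b)`. -/
noncomputable def schurComplement (p : ℝ × (Fin n → ℝ)) (C : SymMat n) : SymMat n :=
  C - p.1⁻¹ • ⟨vecMulVec p.2 p.2, transpose_vecMulVec p.2 p.2⟩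

lemma coe_schurComplement (p : ℝ × (Fin n → ℝ)) (C : SymMat n) :
    (schurComplement p C).1 = C.1 - (replicateRow (Fin 1) p.2)ᴴ *
      (diagonal fun _ : Fin 1 => p.1)⁻¹ * replicateRow (Fin 1) p.2 := by
  ext i j
  simp [schurComplement, vecMulVec_apply, Matrix.mul_apply, Ring.inverse_eq_inv']
  ring

lemma det_bordered {p : ℝ × (Fin n → ℝ)} (hp : p.1 ≠ 0) (C : SymMat n) :
    (bordered (p, C)).1.det = p.1 * (schurComplement p C).1.det := by
  obtain ⟨e, he⟩ := submatrix_coe_bordered p C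
  have : Invertible (diagonal fun _ : Fin 1 => p.1) := invertibleOfIsUnitDet _ (by simpa using hp)
  rw [← det_submatrix_equiv_self e, he, det_fromBlocks₁₁, invOf_eq_nonsing_inv,
    ← coe_schurComplement]
  simp

lemma posDef_bordered_iff (p : ℝ × (Fin n → ℝ)) (C : SymMat n) :
    (bordered (p, C)).1.PosDef ↔ 0 < p.1 ∧ (schurComplement p C).1.PosDef := by
  have posDef_iff (hp : 0 < p.1) :
      (bordered (p, C)).1.PosDef ↔ (schurComplement p C).1.PosDef := by
    obtain ⟨e, he⟩ := submatrix_coe_bordered p C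
    rw [← posDef_submatrix_equiv_iff e, he, posDef_fromBlocks_iff_posDef_schurComplement
      (.diagonal fun _ => hp), coe_schurComplement]
  constructor
  · intro h
    have hp : 0 < p.1 := h.diag_pos (i := 0)
    exact ⟨hp, (posDef_iff hp).mp h⟩
  · rintro ⟨hp, h⟩
    exact (posDef_iff hp).mpr h

lemma trace_bordered (p : ℝ × (Fin n → ℝ)) (C : SymMat n) :
    (bordered (p, C)).1.trace =
      p.1 + p.1⁻¹ * ∑ i, p.2 i ^ 2 + (schurComplement p C).1.trace := by
  simp [trace, Fin.sum_univ_succ, bordered, schurComplement, vecMulVec_apply, Finset.mul_sum,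
    pow_two]

lemma measurePreserving_schurComplement (ν : Measure (SymMat n)) [ν.IsAddHaarMeasure] :
    MeasurePreserving (fun q : (ℝ × (Fin n → ℝ)) × SymMat n => (q.1, schurComplement q.1 q.2))
      (volume.prod ν) (volume.prod ν) := by
  have : Measurable fun b : Fin n → ℝ =>
      (⟨vecMulVec b b, transpose_vecMulVec b b⟩ : SymMat n) :=
    (Continuous.subtype_mk (by fun_prop) _).measurable
  refine (MeasurePreserving.id volume).skew_product ?_ (ae_of_all _ fun p => ?_)
  · unfold schurComplement
    fun_prop
  · exact (measurePreserving_sub_right ν _).map_eq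

open Classical in
/-- `exp (-tr(A x)) det(x)^s` on positive definite `x`, extended by `0`: its integral is the Laplace
transform at `A` of the measure with density `det^s` on the positive definite cone. -/
noncomputable def coneDensity (s : ℝ) (A : Matrix (Fin n) (Fin n) ℝ) (x : SymMat n) : ℝ :=
  if x.1.PosDef then Real.exp (-(A * x.1).trace) * x.1.det ^ s else 0

/-- The factor `exp (-a) a^s exp (-‖b‖² / a)` on `0 < a` that the first row `p = (a, b)` of a
bordered matrix contributes to `coneDensity s 1`. -/
noncomputable def borderDensity (s : ℝ) (p : ℝ × (Fin n → ℝ)) : ℝ :=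
  (Set.Ioi 0).indicator (fun a => Real.exp (-a) * a ^ s) p.1 *
    ∏ i, Real.exp (-p.1⁻¹ * p.2 i ^ 2)

lemma coneDensity_bordered (s : ℝ) (p : ℝ × (Fin n → ℝ)) (C : SymMat n) :
    coneDensity s 1 (bordered (p, C)) =
      borderDensity s p * coneDensity s 1 (schurComplement p C) := by
  by_cases hp : 0 < p.1
  swap
  · simp [coneDensity, borderDensity, posDef_bordered_iff, hp]
  by_cases hC : (schurComplement p C).1.PosDef
  swap
  · simp only [coneDensity, posDef_bordered_iff, hC, and_false, if_false, mul_zero]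
  · simp only [coneDensity, borderDensity, posDef_bordered_iff, hp, hC, and_self, if_true,
      Set.mem_Ioi, Set.indicator_of_mem, one_mul, ← Real.exp_sum, ← Finset.mul_sum]
    rw [det_bordered hp.ne', trace_bordered, Real.mul_rpow hp.le hC.det_pos.le, neg_add, neg_add,
      Real.exp_add, Real.exp_add, neg_mul]
    ring

lemma integral_borderDensity_fibre (s a : ℝ) :
    ∫ b : Fin n → ℝ, borderDensity s (a, b) =
      √Real.pi ^ n * (Set.Ioi 0).indicator (fun a => Real.exp (-a) * a ^ (s + n / 2)) a := by
  by_cases ha : 0 < a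
  · have gaussian : ∫ t : ℝ, Real.exp (-a⁻¹ * t ^ 2) = √Real.pi * a ^ (1 / 2 : ℝ) := by
      rw [integral_gaussian, div_inv_eq_mul, Real.sqrt_mul Real.pi_nonneg, ← Real.sqrt_eq_rpow]
    simp only [borderDensity, Set.indicator_of_mem (Set.mem_Ioi.mpr ha)]
    rw [integral_const_mul, integral_fintype_prod_volume_eq_pow fun t => Real.exp (-a⁻¹ * t ^ 2),
      gaussian, Fintype.card_fin, mul_pow, ← Real.rpow_mul_natCast ha.le, Real.rpow_add ha]
    ring_nf
  · simp [borderDensity, ha]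

lemma integrable_borderDensity {s : ℝ} (hs : -1 < s) :
    Integrable (borderDensity (n := n) s) := by
  have measurable : Measurable (borderDensity (n := n) s) := by
    have : Measurable ((Set.Ioi 0).indicator fun a : ℝ => Real.exp (-a) * a ^ s) :=
      Measurable.indicator (by fun_prop) measurableSet_Ioi
    unfold borderDensity
    fun_prop
  have nonneg (p : ℝ × (Fin n → ℝ)) : 0 ≤ borderDensity s p :=
    mul_nonneg (Set.indicator_nonneg (fun a (ha : 0 < a) => by positivity) _) (by positivity)
  refine (integrable_prod_iff measurable.aestronglyMeasurable).mpr ⟨ae_of_all _ fun a => ?_, ?_⟩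
  · by_cases ha : 0 < a
    · simp only [borderDensity]
      exact (Integrable.fintype_prod (μ := fun _ => volume)
        fun _ : Fin n => integrable_exp_neg_mul_sq (inv_pos.mpr ha)).const_mul (α := Fin n → ℝ) _
    · simp [borderDensity, ha]
  · simp only [Real.norm_of_nonneg (nonneg _), integral_borderDensity_fibre]
    have gamma_integrable :
        IntegrableOn (fun a => Real.exp (-a) * a ^ (s + n / 2)) (Set.Ioi 0) := by
      have : 0 < s + n / 2 + 1 := by linarith [show 0 ≤ (n : ℝ) / 2 by positivity]
      simpa using Real.GammaIntegral_convergent this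
    exact (gamma_integrable.integrable_indicator measurableSet_Ioi).const_mul _

lemma integral_borderDensity_pos {s : ℝ} (hs : -1 < s) :
    0 < ∫ p : ℝ × (Fin n → ℝ), borderDensity s p := by
  have exponent_pos : 0 < s + n / 2 + 1 := by linarith [show 0 ≤ (n : ℝ) / 2 by positivity]
  have gamma_integral :
      ∫ a in Set.Ioi 0, Real.exp (-a) * a ^ (s + n / 2) = Real.Gamma (s + n / 2 + 1) := by
    simp [Real.Gamma_eq_integral exponent_pos]
  rw [Measure.volume_eq_prod, integral_prod _ (integrable_borderDensity hs)]
  simp only [integral_borderDensity_fibre]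
  rw [integral_const_mul, integral_indicator measurableSet_Ioi, gamma_integral]
  exact mul_pos (by positivity) (Real.Gamma_pos_of_pos exponent_pos)

section BorderedProduct

variable {s : ℝ} {ν : Measure (SymMat n)} [ν.IsAddHaarMeasure]

lemma integrable_coneDensity_bordered (hs : -1 < s) (hν : Integrable (coneDensity s 1) ν) :
    Integrable (fun q => coneDensity s 1 (bordered q)) (volume.prod ν) := by
  have integrable_mul := (integrable_borderDensity (n := n) hs).mul_prod hν
  refine ((measurePreserving_schurComplement ν).integrable_comp_of_integrable integrable_mul).congr
    (ae_of_all _ fun q => ?_)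
  exact (coneDensity_bordered s q.1 q.2).symm

lemma integral_coneDensity_bordered (hs : -1 < s) (hν : Integrable (coneDensity s 1) ν) :
    ∫ q, coneDensity s 1 (bordered q) ∂volume.prod ν =
      (∫ p : ℝ × (Fin n → ℝ), borderDensity s p) * ∫ C, coneDensity s 1 C ∂ν := by
  have shear := measurePreserving_schurComplement ν
  have integrable_mul := (integrable_borderDensity (n := n) hs).mul_prod hν
  calc ∫ q, coneDensity s 1 (bordered q) ∂volume.prod ν
      = ∫ q, borderDensity s q.1 * coneDensity s 1 (schurComplement q.1 q.2) ∂volume.prod ν :=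
        integral_congr_ae (ae_of_all _ fun q => coneDensity_bordered s q.1 q.2)
    _ = ∫ q, borderDensity s q.1 * coneDensity s 1 q.2 ∂(volume.prod ν).map
          fun q => (q.1, schurComplement q.1 q.2) :=
        (integral_map shear.aemeasurable
          (shear.map_eq.symm ▸ integrable_mul.aestronglyMeasurable)).symm
    _ = _ := by rw [shear.map_eq, integral_prod_mul]

end BorderedProduct

lemma measurableEmbedding_bordered : MeasurableEmbedding (bordered (n := n)) :=
  bordered.toContinuousLinearEquiv.toHomeomorph.measurableEmbedding

lemma exists_eq_smul_map_bordered (μ : Measure (SymMat (n + 1))) [μ.IsAddHaarMeasure]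
    (ν : Measure (SymMat n)) [ν.IsAddHaarMeasure] :
    ∃ c : NNReal, 0 < c ∧ μ = c • (volume.prod ν).map bordered := by
  have : (volume : Measure (ℝ × (Fin n → ℝ))).IsAddHaarMeasure :=
    Measure.prod.instIsAddHaarMeasure volume volume
  have : ((volume.prod ν).map bordered).IsAddHaarMeasure :=
    bordered.toContinuousLinearEquiv.isAddHaarMeasure_map (volume.prod ν)
  exact ⟨_, μ.addHaarScalarFactor_pos_of_isAddHaarMeasure _, μ.isAddLeftInvariant_eq_smul _⟩

lemma coneDensity_fin_zero (s : ℝ) (A : Matrix (Fin 0) (Fin 0) ℝ) :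
    coneDensity s A = fun _ => 1 := by
  ext x
  have hx : x.1.PosDef := Subsingleton.elim 1 x.1 ▸ PosDef.one
  simp [coneDensity, hx]

section Integral

variable {s : ℝ} (μ : Measure (SymMat n)) [μ.IsAddHaarMeasure]

lemma integrable_coneDensity_one (hs : -1 < s) : Integrable (coneDensity s 1) μ := by
  induction n with
  | zero =>
    rw [coneDensity_fin_zero]
    exact integrable_const 1
  | succ n ih =>
    obtain ⟨c, -, rfl⟩ := exists_eq_smul_map_bordered μ Measure.addHaar
    exact (measurableEmbedding_bordered.integrable_map_iff.mpr
      (integrable_coneDensity_bordered hs (ih Measure.addHaar))).smul_measure_nnreal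

lemma integral_coneDensity_one_pos (hs : -1 < s) : 0 < ∫ x, coneDensity s 1 x ∂μ := by
  induction n with
  | zero => simp [coneDensity_fin_zero]
  | succ n ih =>
    obtain ⟨c, hc, rfl⟩ := exists_eq_smul_map_bordered μ Measure.addHaar
    rw [integral_smul_nnreal_measure, measurableEmbedding_bordered.integral_map,
      integral_coneDensity_bordered hs (integrable_coneDensity_one _ hs)]
    exact smul_pos hc (mul_pos (integral_borderDensity_pos hs) (ih Measure.addHaar))

lemma coneDensity_transpose_mul_mul (s : ℝ) (A : Matrix (Fin n) (Fin n) ℝ)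
    {B : Matrix (Fin n) (Fin n) ℝ} (hB : IsUnit B) (x : SymMat n) :
    coneDensity s (Bᵀ * A * B) x = (B.det ^ 2) ^ (-s) * coneDensity s A (congruence B x) := by
  have det_sq_pos : 0 < B.det ^ 2 := sq_pos_of_ne_zero ((isUnit_iff_isUnit_det B).mp hB).ne_zero
  have posDef_iff : (congruence B x).1.PosDef ↔ x.1.PosDef := by
    simpa [conjTranspose_eq_transpose_of_trivial, star_eq_conjTranspose] using
      IsUnit.posDef_star_right_conjugate_iff (x := x.1) hB
  have trace_eq : (A * (congruence B x).1).trace = (Bᵀ * A * B * x.1).trace := by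
    rw [coe_congruence, ← Matrix.mul_assoc, trace_mul_comm]
    simp only [Matrix.mul_assoc]
  have det_eq : (congruence B x).1.det = B.det ^ 2 * x.1.det := by
    simp only [coe_congruence, det_mul, det_transpose]
    ring
  by_cases hx : x.1.PosDef
  · simp only [coneDensity, posDef_iff, hx, if_true, trace_eq, det_eq]
    rw [Real.mul_rpow det_sq_pos.le hx.det_pos.le, Real.rpow_neg det_sq_pos.le]
    field_simp
  · simp only [coneDensity, posDef_iff, hx, if_false, mul_zero]

lemma integrable_coneDensity_transpose_mul_mul {A B : Matrix (Fin n) (Fin n) ℝ} (hB : IsUnit B)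
    (hA : Integrable (coneDensity s A) μ) : Integrable (coneDensity s (Bᵀ * A * B)) μ := by
  rw [funext (coneDensity_transpose_mul_mul s A hB)]
  exact (integrable_comp_linearMap (det_congruence_ne_zero hB) hA).const_mul _

lemma integral_coneDensity_transpose_mul_mul (s : ℝ) (A : Matrix (Fin n) (Fin n) ℝ)
    {B : Matrix (Fin n) (Fin n) ℝ} (hB : IsUnit B) :
    ∫ x, coneDensity s (Bᵀ * A * B) x ∂μ =
      (B.det ^ 2) ^ (-(s + (n + 1) / 2)) * ∫ x, coneDensity s A x ∂μ := by
  have det_sq_pos : 0 < B.det ^ 2 := sq_pos_of_ne_zero ((isUnit_iff_isUnit_det B).mp hB).ne_zero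
  have jacobian : |(LinearMap.det (congruence B))⁻¹| = (B.det ^ 2) ^ (-((n + 1) / 2 : ℝ)) := by
    rw [det_congruence, abs_inv, abs_pow, Real.rpow_neg det_sq_pos.le, ← sq_abs,
      ← Real.rpow_natCast_mul (abs_nonneg _), ← Real.rpow_natCast]
    push_cast
    ring_nf
  simp only [coneDensity_transpose_mul_mul s A hB]
  rw [integral_const_mul, integral_comp_linearMap (det_congruence_ne_zero hB), jacobian,
    smul_eq_mul, ← mul_assoc, ← Real.rpow_add det_sq_pos, neg_add]

variable {A : Matrix (Fin n) (Fin n) ℝ}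

lemma integrable_coneDensity (hs : -1 < s) (hA : A.PosDef) : Integrable (coneDensity s A) μ := by
  obtain ⟨B, hB, rfl⟩ := exists_isUnit_eq_transpose_mul_self hA
  simpa using integrable_coneDensity_transpose_mul_mul μ hB (integrable_coneDensity_one μ hs)

lemma integral_coneDensity (s : ℝ) (hA : A.PosDef) :
    ∫ x, coneDensity s A x ∂μ = A.det ^ (-(s + (n + 1) / 2)) * ∫ x, coneDensity s 1 x ∂μ := by
  obtain ⟨B, hB, rfl⟩ := exists_isUnit_eq_transpose_mul_self hA
  rw [det_mul, det_transpose, ← sq, ← integral_coneDensity_transpose_mul_mul μ s 1 hB,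
    Matrix.mul_one]

lemma integral_coneDensity_pos (hs : -1 < s) (hA : A.PosDef) : 0 < ∫ x, coneDensity s A x ∂μ := by
  rw [integral_coneDensity μ s hA]
  exact mul_pos (Real.rpow_pos_of_pos hA.det_pos _) (integral_coneDensity_one_pos μ hs)

end Integral

lemma exp_mul_coneDensity (s : ℝ) (z A : Matrix (Fin n) (Fin n) ℝ) (x : SymMat n) :
    Real.exp (-(z * x.1).trace) * coneDensity s A x = coneDensity s (z + A) x := by
  simp only [coneDensity, mul_ite, mul_zero, ← mul_assoc, ← Real.exp_add, ← neg_add,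
    Matrix.add_mul, trace_add]

lemma wishartDensity_eq_coneDensity (η : ℝ) (S : Matrix (Fin n) (Fin n) ℝ) :
    wishartDensity n η S = coneDensity (η / 2 - (n + 1) / 2) ((1 / 2 : ℝ) • S⁻¹) := by
  ext x
  simp only [wishartDensity, coneDensity, Matrix.smul_mul, trace_smul, smul_eq_mul]
  ring_nf

end SymMat

/-- The Laplace transform of the central Wishart distribution on `Sym_n(ℝ)`:
for `η > n − 1`, `Σ` symmetric positive definite and symmetric `z` with `Σ⁻¹ + 2z`
positive definite, `∫ exp(−tr(zx)) w_{η,Σ}(x) dμ(x) = det(1 + 2Σz)^{−η/2} ∫ w_{η,Σ} dμ`,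
and both integrals are finite and positive. -/
theorem wishart_laplace_transform {n : ℕ} (hn : 1 ≤ n)
    (μ : Measure (SymMat n)) [μ.IsAddHaarMeasure]
    (η : ℝ) (hη : (n : ℝ) - 1 < η)
    (S : Matrix (Fin n) (Fin n) ℝ) (hS : S.PosDef) (hSsymm : S.IsSymm)
    (z : Matrix (Fin n) (Fin n) ℝ) (hz : z.IsSymm) (hpd : (S⁻¹ + (2 : ℝ) • z).PosDef) :
    Integrable (wishartDensity n η S) μ ∧
    0 < ∫ x, wishartDensity n η S x ∂μ ∧
    Integrable (fun x : SymMat n =>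
      Real.exp (-(z * (x : Matrix (Fin n) (Fin n) ℝ)).trace) * wishartDensity n η S x) μ ∧
    0 < (∫ x : SymMat n,
      Real.exp (-(z * (x : Matrix (Fin n) (Fin n) ℝ)).trace) * wishartDensity n η S x ∂μ) ∧
    (∫ x : SymMat n,
        Real.exp (-(z * (x : Matrix (Fin n) (Fin n) ℝ)).trace) * wishartDensity n η S x ∂μ) =
      ((1 + (2 : ℝ) • (S * z)).det) ^ (-(η / 2)) * ∫ x, wishartDensity n η S x ∂μ := by
  let s : ℝ := η / 2 - (n + 1) / 2
  let A : Matrix (Fin n) (Fin n) ℝ := (1 / 2 : ℝ) • S⁻¹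
  have hs : -1 < s := by simp only [s]; linarith
  have hA : A.PosDef := hS.inv.smul (by norm_num)
  have hzA : (z + A).PosDef := by
    have : z + A = (1 / 2 : ℝ) • (S⁻¹ + (2 : ℝ) • z) := by simp only [A]; module
    exact this ▸ hpd.smul (by norm_num)
  have det_eq : (z + A).det = (1 + (2 : ℝ) • (S * z)).det * A.det := by
    have : z + A = A * (1 + (2 : ℝ) • (S * z)) := by
      have := S.nonsing_inv_mul_cancel_left z ((Matrix.isUnit_iff_isUnit_det S).mp hS.isUnit)
      simp [A, Matrix.mul_add, this, add_comm]
    rw [this, Matrix.det_mul, mul_comm]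
  have det_pos : 0 < (1 + (2 : ℝ) • (S * z)).det :=
    pos_of_mul_pos_left (det_eq ▸ hzA.det_pos) hA.det_pos.le
  have exponent : s + (n + 1) / 2 = η / 2 := by simp only [s]; ring
  simp only [SymMat.wishartDensity_eq_coneDensity, SymMat.exp_mul_coneDensity]
  refine ⟨SymMat.integrable_coneDensity μ hs hA, SymMat.integral_coneDensity_pos μ hs hA,
    SymMat.integrable_coneDensity μ hs hzA, SymMat.integral_coneDensity_pos μ hs hzA, ?_⟩
  rw [SymMat.integral_coneDensity μ s hA, SymMat.integral_coneDensity μ s hzA, det_eq,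
    Real.mul_rpow det_pos.le hA.det_pos.le, exponent, mul_assoc]
end

section
/- Let N ≥ r ≥ 1 be integers, let γ be the probability measure on the space of N×r real matrices under which all N·r entries are independent standard Gaussians (the product over Fin N × Fin r of the standard Gaussian measure on ℝ), and let μ be an additive Haar measure on the real vector space Sym_r(ℝ) of r×r real symmetric matrices. Then there exists a constant c > 0 such that the pushforward of γ under the map X ↦ Xᵀ·X (valued in Sym_r(ℝ)) equals the measure with density s ↦ c · exp(−tr(s)/2) · det(s)^{(N−r−1)/2} · 1_{s positive definite} with respect to μ. -/
open MeasureTheory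
open scoped ENNReal Matrix

open ProbabilityTheory

/-- `XᵀX` is symmetric. -/
theorem transpose_mul_self_mem_symMatSubmodule {N r : ℕ} (X : Matrix (Fin N) (Fin r) ℝ) :
    Xᵀ * X ∈ symMatSubmodule r := by
  show (Xᵀ * X)ᵀ = Xᵀ * X
  rw [Matrix.transpose_mul, Matrix.transpose_transpose]

/-! A measure on the cone of positive semidefinite matrices is determined by its Laplace transform
at the positive definite matrices. A congruence `s ↦ h s h` scales both the image of Lebesgue
measure under `X ↦ XᵀX` and the measure `det(s) ^ ((N - r - 1) / 2) ds` by `(det h) ^ (-N)`. As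
every positive definite `t` is a square `h²`, both Laplace transforms are therefore constant
multiples of `t ↦ det(t) ^ (-N / 2)`, so the two measures are proportional. The Gaussian density is
a function of `tr(XᵀX)`, hence passes to the image measure.

The delicate point is that the Laplace transforms are finite when `N = r`, where the determinant
has exponent `-1 / 2`. For this, integrate `exp(-tr((1 + p) s))` over `s` in the cone against
`det(s) ^ a ds` with `a ≥ 0`, and over the rank-one matrices `p = xxᵀ`: integrating in `p` first
lowers the exponent `a` by `1 / 2`, while integrating in `s` first leaves a negative power of
`det(1 + p) = 1 + |x|²`, which is integrable. -/

section PosSemidef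

open Matrix

theorem exists_nat_posDef_add_smul_one {n : Type*} [Finite n] [DecidableEq n] {s : Matrix n n ℝ}
    (hs : s.IsHermitian) : ∃ k : ℕ, (s + (k : ℝ) • (1 : Matrix n n ℝ)).PosDef := by
  cases nonempty_fintype n
  set U := hs.eigenvectorUnitary
  obtain ⟨k, hk⟩ := exists_nat_gt (∑ i, |hs.eigenvalues i|)
  have spectral : s + (k : ℝ) • 1 =
      U.1 * diagonal (fun i => hs.eigenvalues i + k) * star U.1 := by
    have hU : U.1 * star U.1 = 1 := Unitary.mul_star_self_of_mem U.2
    have hdiag : diagonal (fun i => hs.eigenvalues i + k) =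
        diagonal hs.eigenvalues + (k : ℝ) • (1 : Matrix n n ℝ) := by
      rw [smul_one_eq_diagonal, diagonal_add]
    rw [hdiag, Matrix.mul_add, Matrix.add_mul, Matrix.mul_smul, Matrix.smul_mul, Matrix.mul_one, hU]
    congr 1
    exact hs.spectral_theorem
  refine ⟨k, ?_⟩
  rw [spectral, IsUnit.posDef_star_right_conjugate_iff Unitary.isUnit_coe, posDef_diagonal_iff]
  intro i
  have := Finset.single_le_sum (fun j _ => abs_nonneg (hs.eigenvalues j)) (Finset.mem_univ i)
  linarith [neg_abs_le (hs.eigenvalues i)]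

variable {n : Type*} [Fintype n]

open scoped ComplexOrder MatrixOrder in
theorem trace_mul_nonneg {𝕜 : Type*} [RCLike 𝕜] {s t : Matrix n n 𝕜} (ht : t.PosSemidef)
    (hs : s.PosSemidef) : 0 ≤ (t * s).trace := by
  classical
  obtain ⟨b, rfl⟩ := CStarAlgebra.nonneg_iff_eq_star_mul_self.mp ht.nonneg
  rw [star_eq_conjTranspose, Matrix.mul_assoc, trace_mul_comm]
  exact (hs.mul_mul_conjTranspose_same b).trace_nonneg

theorem trace_vecMulVec_mul {R : Type*} [CommSemiring R] (x y : n → R) (s : Matrix n n R) :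
    (vecMulVec x y * s).trace = y ⬝ᵥ (s *ᵥ x) := by
  rw [vecMulVec_mul, trace_vecMulVec, dotProduct_comm, dotProduct_mulVec]

theorem abs_apply_le_trace {s : Matrix n n ℝ} (hs : s.PosSemidef) (i j : n) :
    |s i j| ≤ s.trace := by
  classical
  have hdiag (k : n) : s k k ≤ s.trace :=
    Finset.single_le_sum (f := s.diag) (fun l _ => hs.diag_nonneg) (Finset.mem_univ k)
  have hsymm : s j i = s i j := by simpa using hs.isHermitian.apply i j
  have hadd := hs.dotProduct_mulVec_nonneg (Pi.single i 1 + Pi.single j 1)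
  have hsub := hs.dotProduct_mulVec_nonneg (Pi.single i 1 - Pi.single j 1)
  simp only [star_trivial, mulVec_add, mulVec_sub, mulVec_single, MulOpposite.op_one, one_smul,
    dotProduct_add, dotProduct_sub, add_dotProduct, sub_dotProduct, single_dotProduct, col_apply,
    one_mul, hsymm] at hadd hsub
  rw [abs_le]
  constructor <;> linarith [hdiag i, hdiag j]

theorem det_le_exp_trace [DecidableEq n] {s : Matrix n n ℝ} (hs : s.PosSemidef) :
    s.det ≤ Real.exp s.trace := by
  rw [hs.isHermitian.det_eq_prod_eigenvalues, hs.isHermitian.trace_eq_sum_eigenvalues,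
    Real.exp_sum]
  exact Finset.prod_le_prod (fun i _ => hs.eigenvalues_nonneg i) fun i _ =>
    (le_add_of_nonneg_right zero_le_one).trans (Real.add_one_le_exp _)

open scoped ComplexOrder MatrixOrder in
theorem exists_posDef_mul_self_eq {𝕜 : Type*} [RCLike 𝕜] {t : Matrix n n 𝕜} (ht : t.PosDef) :
    ∃ h : Matrix n n 𝕜, h.PosDef ∧ h * h = t := by
  classical
  have hsq : CFC.sqrt t * CFC.sqrt t = t := CFC.sqrt_mul_sqrt_self t ht.posSemidef.nonneg
  refine ⟨CFC.sqrt t, ?_, hsq⟩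
  refine (nonneg_iff_posSemidef.1 (CFC.sqrt_nonneg t)).posDef_iff_det_ne_zero.2 fun h0 => ?_
  have := ht.det_pos
  rw [← hsq, det_mul, h0, zero_mul] at this
  exact this.false

end PosSemidef

section Congruence

open Matrix

variable {r : ℕ}

theorem isHermitian_coe (s : SymMat r) : s.1.IsHermitian := by
  rw [Matrix.IsHermitian, conjTranspose_eq_transpose_of_trivial]
  exact s.2

theorem eq_of_forall_trace_vecMulVec_mul_eq {s t : SymMat r}
    (h : ∀ x : Fin r → ℝ, (vecMulVec x x * s.1).trace = (vecMulVec x x * t.1).trace) : s = t := by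
  have hsub (u v : SymMat r)
      (huv : ∀ x : Fin r → ℝ, (vecMulVec x x * u.1).trace = (vecMulVec x x * v.1).trace) :
      (v.1 - u.1).PosSemidef := by
    refine posSemidef_iff_dotProduct_mulVec.2 ⟨isHermitian_coe (v - u), fun x => ?_⟩
    rw [star_trivial, sub_mulVec, dotProduct_sub, ← trace_vecMulVec_mul, ← trace_vecMulVec_mul,
      huv x, sub_self]
  open scoped MatrixOrder in
  exact Subtype.ext (le_antisymm (hsub s t h) (hsub t s fun x => (h x).symm))

/-- The congruence action `s ↦ gᵀ s g` on symmetric matrices, as a linear endomorphism. -/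
def congruence (g : Matrix (Fin r) (Fin r) ℝ) : SymMat r →ₗ[ℝ] SymMat r where
  toFun s := ⟨gᵀ * s.1 * g, by
    have hs : s.1ᵀ = s.1 := s.2
    change (gᵀ * s.1 * g)ᵀ = gᵀ * s.1 * g
    rw [transpose_mul, transpose_mul, transpose_transpose, hs, Matrix.mul_assoc]⟩
  map_add' s t := Subtype.ext (by simp [Matrix.mul_add, Matrix.add_mul])
  map_smul' c s := Subtype.ext (by simp)

@[simp]
theorem coe_congruence (g : Matrix (Fin r) (Fin r) ℝ) (s : SymMat r) :
    (congruence g s).1 = gᵀ * s.1 * g := rfl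

theorem congruence_one : congruence (1 : Matrix (Fin r) (Fin r) ℝ) = LinearMap.id :=
  LinearMap.ext fun s => Subtype.ext (by simp)

theorem congruence_mul (g h : Matrix (Fin r) (Fin r) ℝ) :
    congruence (g * h) = congruence h ∘ₗ congruence g :=
  LinearMap.ext fun s => Subtype.ext (by simp [Matrix.mul_assoc])

theorem det_congruence_mul (g h : Matrix (Fin r) (Fin r) ℝ) :
    LinearMap.det (congruence (g * h)) =
      LinearMap.det (congruence g) * LinearMap.det (congruence h) := by
  rw [congruence_mul, LinearMap.det_comp, mul_comm]

theorem posDef_congruence_iff {h : Matrix (Fin r) (Fin r) ℝ} (hh : IsUnit h) (s : SymMat r) :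
    (congruence h s).1.PosDef ↔ s.1.PosDef := by
  rw [coe_congruence, ← conjTranspose_eq_transpose_of_trivial]
  exact Matrix.IsUnit.posDef_star_left_conjugate_iff hh

/-- The entries on and above the diagonal, as linear coordinates on symmetric matrices. -/
def upperEntries (r : ℕ) : SymMat r ≃ₗ[ℝ] ({p : Fin r × Fin r // p.1 ≤ p.2} → ℝ) where
  toFun s p := s.1 p.1.1 p.1.2
  map_add' _ _ := rfl
  map_smul' _ _ := rfl
  invFun x := ⟨Matrix.of fun i j => x ⟨(min i j, max i j), min_le_max⟩, by
    change (Matrix.of _)ᵀ = _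
    ext i j
    simp [min_comm, max_comm]⟩
  left_inv s := by
    refine Subtype.ext (Matrix.ext fun i j => ?_)
    rcases le_total i j with h | h
    · simp [h]
    · simpa [h] using IsSymm.apply s.2 i j
  right_inv x := by
    ext ⟨⟨i, j⟩, h⟩
    have h' : i ≤ j := h
    simp [h']

@[simp]
theorem upperEntries_apply (s : SymMat r) (p : {p : Fin r × Fin r // p.1 ≤ p.2}) :
    upperEntries r s p = s.1 p.1.1 p.1.2 := rfl

theorem norm_upperEntries_le_trace {s : SymMat r} (hs : s.1.PosSemidef) :
    ‖upperEntries r s‖ ≤ s.1.trace :=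
  (pi_norm_le_iff_of_nonneg hs.trace_nonneg).2 fun p => abs_apply_le_trace hs p.1.1 p.1.2

theorem prod_upper_mul {R : Type*} [CommMonoid R] (d : Fin r → R) :
    ∏ p : {p : Fin r × Fin r // p.1 ≤ p.2}, d p.1.1 * d p.1.2 = (∏ i, d i) ^ (r + 1) := by
  have rows : ∏ p : Fin r × Fin r with p.1 ≤ p.2, d p.1 = ∏ i, d i ^ (r - i : ℕ) := by
    rw [Finset.prod_filter, Fintype.prod_prod_type]
    refine Finset.prod_congr rfl fun i _ => ?_
    rw [← Finset.prod_filter, Finset.filter_le_eq_Ici]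
    simp
  have columns : ∏ p : Fin r × Fin r with p.1 ≤ p.2, d p.2 = ∏ i, d i ^ (i + 1 : ℕ) := by
    rw [Finset.prod_filter, Fintype.prod_prod_type_right]
    refine Finset.prod_congr rfl fun i _ => ?_
    rw [← Finset.prod_filter, Finset.filter_ge_eq_Iic]
    simp
  rw [← Finset.prod_subtype (Finset.univ.filter fun p : Fin r × Fin r => p.1 ≤ p.2) (by simp)
    (fun p => d p.1 * d p.2), Finset.prod_mul_distrib, rows, columns, ← Finset.prod_mul_distrib,
    ← Finset.prod_pow]
  refine Finset.prod_congr rfl fun i _ => ?_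
  rw [← pow_add]
  congr 1
  omega

theorem det_congruence_diagonal (d : Fin r → ℝ) :
    LinearMap.det (congruence (diagonal d)) = (∏ i, d i) ^ (r + 1) := by
  have hdiag : (upperEntries r).toLinearMap ∘ₗ congruence (diagonal d) ∘ₗ
      (upperEntries r).symm.toLinearMap =
        LinearMap.pi fun p => ((d p.1.1 * d p.1.2) • LinearMap.id).comp (LinearMap.proj p) := by
    refine LinearMap.ext fun x => funext fun p => ?_
    obtain ⟨s, rfl⟩ := (upperEntries r).surjective x
    simp
    ring
  rw [← LinearMap.det_conj (congruence (diagonal d)) (upperEntries r), hdiag, LinearMap.det_pi]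
  simp [prod_upper_mul]

theorem det_congruence {h : Matrix (Fin r) (Fin r) ℝ} (hh : h.IsHermitian) :
    LinearMap.det (congruence h) = h.det ^ (r + 1) := by
  have spectral : h = hh.eigenvectorUnitary.1 * diagonal hh.eigenvalues *
      star hh.eigenvectorUnitary.1 := hh.spectral_theorem
  have unitary : LinearMap.det (congruence hh.eigenvectorUnitary.1) *
      LinearMap.det (congruence (star hh.eigenvectorUnitary.1)) = 1 := by
    rw [← det_congruence_mul, Unitary.mul_star_self_of_mem hh.eigenvectorUnitary.2,
      congruence_one, LinearMap.det_id]
  calc LinearMap.det (congruence h)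
      = LinearMap.det (congruence hh.eigenvectorUnitary.1) *
          LinearMap.det (congruence (diagonal hh.eigenvalues)) *
          LinearMap.det (congruence (star hh.eigenvectorUnitary.1)) := by
        conv_lhs => rw [spectral]
        rw [det_congruence_mul, det_congruence_mul]
    _ = LinearMap.det (congruence (diagonal hh.eigenvalues)) := by
        rw [mul_right_comm, unitary, one_mul]
    _ = h.det ^ (r + 1) := by
        rw [det_congruence_diagonal, hh.det_eq_prod_eigenvalues]
        rfl

end Congruence

section Gram

open Matrix

variable {r : ℕ} {m : Type*} [Fintype m]

/-- The Gram matrix `XᵀX` of the columns of `X`, as a symmetric matrix. -/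
def gramMatrix (X : Matrix m (Fin r) ℝ) : SymMat r :=
  ⟨Xᵀ * X, by
    change (Xᵀ * X)ᵀ = Xᵀ * X
    rw [transpose_mul, transpose_transpose]⟩

@[simp]
theorem coe_gramMatrix (X : Matrix m (Fin r) ℝ) : (gramMatrix X).1 = Xᵀ * X := rfl

theorem congruence_gramMatrix (h : Matrix (Fin r) (Fin r) ℝ) (X : Matrix m (Fin r) ℝ) :
    congruence h (gramMatrix X) = gramMatrix (X * h) :=
  Subtype.ext (by simp [Matrix.mul_assoc])

theorem posSemidef_gramMatrix (X : Matrix m (Fin r) ℝ) : (gramMatrix X).1.PosSemidef := by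
  simpa [conjTranspose_eq_transpose_of_trivial] using posSemidef_conjTranspose_mul_self X

theorem trace_gramMatrix (X : Matrix m (Fin r) ℝ) :
    (gramMatrix X).1.trace = ∑ j, ∑ i, X i j ^ 2 := by
  simp [trace, mul_apply, sq]

theorem continuous_gramMatrix : Continuous (gramMatrix : Matrix m (Fin r) ℝ → SymMat r) :=
  Continuous.subtype_mk (by fun_prop) _

theorem det_one_add_gramMatrix {ι : Type*} [Unique ι] (X : Matrix ι (Fin r) ℝ) :
    (1 + (gramMatrix X).1).det = 1 + (gramMatrix X).1.trace := by
  rw [coe_gramMatrix, det_one_add_mul_comm, trace_mul_comm]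
  simp [det_unique, trace]

theorem det_mulRightLinearMap (h : Matrix (Fin r) (Fin r) ℝ) :
    LinearMap.det (mulRightLinearMap m ℝ h) = h.det ^ Fintype.card m := by
  have hrow : mulRightLinearMap m ℝ h =
      LinearMap.pi fun i => (toLin' hᵀ).comp (LinearMap.proj i) := by
    ext X i j
    change (X * h) i j = (hᵀ *ᵥ X i) j
    rw [mulVec_transpose]
    rfl
  rw [hrow]
  refine (LinearMap.det_pi fun _ : m => toLin' hᵀ).trans ?_
  simp

end Gram

section Topology

open Matrix

variable {r : ℕ}

instance borelSpace_matrix {m n : Type*} [Countable m] [Countable n] :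
    BorelSpace (Matrix m n ℝ) :=
  inferInstanceAs (BorelSpace (m → n → ℝ))

instance polishSpace_matrix {m n : Type*} [Countable m] [Countable n] :
    PolishSpace (Matrix m n ℝ) :=
  inferInstanceAs (PolishSpace (m → n → ℝ))

instance polishSpace_symMat : PolishSpace (SymMat r) :=
  (symMatSubmodule r).closed_of_finiteDimensional.polishSpace

instance sigmaCompactSpace_symMat : SigmaCompactSpace (SymMat r) :=
  (upperEntries r).toContinuousLinearEquiv.toHomeomorph.isClosedEmbedding.sigmaCompactSpace

theorem isClosed_setOf_posSemidef : IsClosed {s : SymMat r | s.1.PosSemidef} := by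
  simp only [posSemidef_iff_dotProduct_mulVec, isHermitian_coe, true_and, star_trivial,
    Set.ofPred_forall]
  exact isClosed_iInter fun x => isClosed_le continuous_const
    (continuous_const.dotProduct (continuous_subtype_val.matrix_mulVec continuous_const))

theorem measurableSet_setOf_posDef : MeasurableSet {s : SymMat r | s.1.PosDef} := by
  have : {s : SymMat r | s.1.PosDef} = {s | s.1.PosSemidef} ∩ {s | s.1.det ≠ 0} :=
    Set.ext fun s => ⟨fun h => ⟨h.posSemidef, h.det_pos.ne'⟩,
      fun h => h.1.posDef_iff_det_ne_zero.2 h.2⟩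
  rw [this]
  exact isClosed_setOf_posSemidef.measurableSet.inter
    (isOpen_ne_fun continuous_subtype_val.matrix_det continuous_const).measurableSet

theorem measurable_ofReal_det_rpow (a : ℝ) :
    Measurable fun s : SymMat r => ENNReal.ofReal (s.1.det ^ a) :=
  (continuous_subtype_val.matrix_det.measurable.pow_const a).ennreal_ofReal

theorem measurable_congruence (h : Matrix (Fin r) (Fin r) ℝ) : Measurable (congruence h) :=
  (congruence h).continuous_of_finiteDimensional.measurable

theorem measurable_gramMatrix {m : Type*} [Fintype m] :
    Measurable (gramMatrix : Matrix m (Fin r) ℝ → SymMat r) :=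
  continuous_gramMatrix.measurable

/-- A vector indexed by pairs, seen as a matrix. -/
noncomputable def matrixEquiv (m n : Type*) [Finite m] [Finite n] :
    (m × n → ℝ) ≃L[ℝ] Matrix m n ℝ :=
  ((LinearEquiv.curry ℝ ℝ m n).trans (Matrix.ofLinearEquiv ℝ)).toContinuousLinearEquiv

theorem measurable_matrixEquiv {m n : Type*} [Finite m] [Finite n] :
    Measurable (matrixEquiv m n) :=
  (matrixEquiv m n).continuous.measurable

theorem trace_gramMatrix_matrixEquiv {m : Type*} [Fintype m] (v : m × Fin r → ℝ) :
    (gramMatrix (matrixEquiv m (Fin r) v)).1.trace = ∑ p, v p ^ 2 := by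
  rw [trace_gramMatrix, Fintype.sum_prod_type_right]
  rfl

/-- Lebesgue measure on matrices, as the product of the Lebesgue measures of the entries. -/
noncomputable def matrixVolume (m n : Type*) [Fintype m] [Fintype n] : Measure (Matrix m n ℝ) :=
  (volume : Measure (m × n → ℝ)).map (matrixEquiv m n)

instance isAddHaarMeasure_matrixVolume (m n : Type*) [Fintype m] [Fintype n] :
    (matrixVolume m n).IsAddHaarMeasure :=
  (matrixEquiv m n).isAddHaarMeasure_map volume

instance sFinite_matrixVolume (m n : Type*) [Fintype m] [Fintype n] :
    SFinite (matrixVolume m n) := by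
  unfold matrixVolume
  infer_instance

end Topology

section Measure

theorem map_withDensity_comp {α β : Type*} [MeasurableSpace α] [MeasurableSpace β] (m : Measure α)
    {T : α → β} (hT : Measurable T) {f : β → ℝ≥0∞} (hf : Measurable f) :
    (m.withDensity (f ∘ T)).map T = (m.map T).withDensity f := by
  ext s hs
  rw [Measure.map_apply hT hs, withDensity_apply _ (hT hs), withDensity_apply _ hs,
    setLIntegral_map hs hf hT]
  rfl

theorem pi_withDensity_ofReal {ι : Type*} [Fintype ι] {X : ι → Type*} [∀ i, MeasurableSpace (X i)]
    (m : ∀ i, Measure (X i)) [∀ i, SigmaFinite (m i)] {p : ∀ i, X i → ℝ}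
    (hp : ∀ i, Integrable (p i) (m i)) (h0 : ∀ i x, 0 ≤ p i x) :
    (Measure.pi fun i => (m i).withDensity fun x => ENNReal.ofReal (p i x)) =
      (Measure.pi m).withDensity fun v => ENNReal.ofReal (∏ i, p i (v i)) := by
  have (i : ι) : IsFiniteMeasure ((m i).withDensity fun x => ENNReal.ofReal (p i x)) :=
    isFiniteMeasure_withDensity_ofReal (hp i).2
  refine Measure.pi_eq fun s hs => ?_
  rw [withDensity_apply _ (MeasurableSet.univ_pi hs), Measure.restrict_pi_pi,
    ← ofReal_integral_eq_lintegral_ofReal (Integrable.fintype_prod_dep fun i => (hp i).restrict)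
      (.of_forall fun v => Finset.prod_nonneg fun i _ => h0 i _),
    integral_fintype_prod_eq_prod, ENNReal.ofReal_prod_of_nonneg fun i _ => integral_nonneg (h0 i)]
  refine Finset.prod_congr rfl fun i _ => ?_
  rw [withDensity_apply _ (hs i), ofReal_integral_eq_lintegral_ofReal (hp i).restrict
    (.of_forall (h0 i))]

theorem ext_of_integral_eq_of_submonoid {X : Type*} [TopologicalSpace X] [PolishSpace X]
    [MeasurableSpace X] [BorelSpace X] {P P' : Measure X} [IsFiniteMeasure P] [IsFiniteMeasure P']
    (M : Submonoid (BoundedContinuousFunction X ℝ))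
    (hsep : ∀ x y, x ≠ y → ∃ f ∈ M, f x ≠ f y)
    (hint : ∀ f ∈ M, ∫ x, f x ∂P = ∫ x, f x ∂P') : P = P' := by
  have hstar : star (M : Set (BoundedContinuousFunction X ℝ)) = M := by
    ext f
    simp [Set.mem_star, show star f = f from by ext; simp]
  refine ext_of_forall_mem_subalgebra_integral_eq_of_polish (𝕜 := ℝ)
    (A := StarAlgebra.adjoin ℝ M) (fun x y hxy => ?_) fun f hf => ?_
  · obtain ⟨f, hf, hfxy⟩ := hsep x y hxy
    exact ⟨f, ⟨f.toContinuousMap, ⟨f, StarAlgebra.subset_adjoin ℝ _ hf, rfl⟩, rfl⟩, hfxy⟩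
  · have hspan : f ∈ Submodule.span ℝ (M : Set (BoundedContinuousFunction X ℝ)) := by
      have hf' : f ∈ Subalgebra.toSubmodule (StarAlgebra.adjoin ℝ
        (M : Set (BoundedContinuousFunction X ℝ))).toSubalgebra := hf
      rwa [StarAlgebra.adjoin_eq_span, hstar, Set.union_self, Submonoid.closure_eq] at hf'
    clear hf
    induction hspan using Submodule.span_induction with
    | mem f hf => exact hint f hf
    | zero => simp
    | add f g _ _ hf hg =>
      simp only [BoundedContinuousFunction.coe_add, Pi.add_apply]
      rw [integral_add (f.integrable P) (g.integrable P),
        integral_add (f.integrable P') (g.integrable P'), hf, hg]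
    | smul c f _ hf =>
      simp only [BoundedContinuousFunction.coe_smul]
      rw [integral_smul, integral_smul, hf]

end Measure

section AddHaar

theorem norm_sq_le_sum_sq {ι : Type*} [Fintype ι] (v : ι → ℝ) : ‖v‖ ^ 2 ≤ ∑ i, v i ^ 2 := by
  have hsum : 0 ≤ ∑ i, v i ^ 2 := by positivity
  refine (Real.le_sqrt (norm_nonneg v) hsum).1
    ((pi_norm_le_iff_of_nonneg (by positivity)).2 fun i => ?_)
  exact Real.abs_le_sqrt (Finset.single_le_sum (fun j _ => sq_nonneg (v j)) (Finset.mem_univ i))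

theorem lintegral_exp_neg_norm_lt_top {ι : Type*} [Fintype ι] (η : Measure (ι → ℝ))
    [η.IsAddHaarMeasure] : ∫⁻ x, ENNReal.ofReal (Real.exp (-‖x‖)) ∂η < ∞ := by
  set k := Fintype.card ι + 1
  have hint : ∫⁻ x : ι → ℝ, ENNReal.ofReal ((1 + ‖x‖) ^ (-(k : ℝ))) ∂η < ∞ :=
    finite_integral_one_add_norm (by simp [k])
  have hbound (u : ℝ) (hu : 0 ≤ u) :
      Real.exp (-u) ≤ Real.exp 1 * k.factorial * (1 + u) ^ (-(k : ℝ)) := by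
    have hpow := Real.pow_div_factorial_le_exp (1 + u) (by linarith) k
    have hpos : 0 < (1 + u) ^ k := by positivity
    rw [Real.rpow_neg (by linarith), Real.rpow_natCast, Real.exp_neg, ← div_eq_mul_inv,
      inv_eq_one_div, div_le_div_iff₀ (Real.exp_pos u) hpos]
    rw [div_le_iff₀ (by positivity), Real.exp_add] at hpow
    linarith
  calc ∫⁻ x, ENNReal.ofReal (Real.exp (-‖x‖)) ∂η
      ≤ ∫⁻ x, ENNReal.ofReal (Real.exp 1 * k.factorial) *
          ENNReal.ofReal ((1 + ‖x‖) ^ (-(k : ℝ))) ∂η := by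
        refine lintegral_mono fun x => ?_
        rw [← ENNReal.ofReal_mul (by positivity)]
        exact ENNReal.ofReal_le_ofReal (hbound _ (norm_nonneg x))
    _ < ∞ := by
        rw [lintegral_const_mul' _ _ ENNReal.ofReal_ne_top]
        exact ENNReal.mul_lt_top ENNReal.ofReal_lt_top hint

variable {E : Type*} [AddCommGroup E] [Module ℝ E] [TopologicalSpace E]
  [IsTopologicalAddGroup E] [MeasurableSpace E] [BorelSpace E]

theorem lintegral_exp_neg_lt_top_of_norm_le {ι : Type*} [Fintype ι] (η : Measure E)
    [η.IsAddHaarMeasure] (e : E ≃L[ℝ] (ι → ℝ)) {s : Set E} (hs : MeasurableSet s) {f : E → ℝ}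
    {C : ℝ} (hf : ∀ x ∈ s, ‖e x‖ ≤ f x + C) :
    ∫⁻ x in s, ENNReal.ofReal (Real.exp (-f x)) ∂η < ∞ := by
  have : (η.map e).IsAddHaarMeasure := e.isAddHaarMeasure_map η
  calc ∫⁻ x in s, ENNReal.ofReal (Real.exp (-f x)) ∂η
      ≤ ∫⁻ x in s, ENNReal.ofReal (Real.exp C) * ENNReal.ofReal (Real.exp (-‖e x‖)) ∂η := by
        refine setLIntegral_mono' hs fun x hx => ?_
        rw [← ENNReal.ofReal_mul (Real.exp_pos C).le, ← Real.exp_add]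
        exact ENNReal.ofReal_le_ofReal (Real.exp_le_exp.2 (by linarith [hf x hx]))
    _ ≤ ∫⁻ x, ENNReal.ofReal (Real.exp C) * ENNReal.ofReal (Real.exp (-‖e x‖)) ∂η :=
        setLIntegral_le_lintegral _ _
    _ = ENNReal.ofReal (Real.exp C) *
          ∫⁻ x, ENNReal.ofReal (Real.exp (-‖x‖)) ∂(η.map e) := by
        rw [lintegral_const_mul' _ _ ENNReal.ofReal_ne_top,
          lintegral_map (by fun_prop) e.continuous.measurable]
    _ < ∞ := ENNReal.mul_lt_top ENNReal.ofReal_lt_top (lintegral_exp_neg_norm_lt_top _)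

variable [ContinuousSMul ℝ E] [T2Space E] [FiniteDimensional ℝ E]

theorem map_linearMap_eq_smul_of_isAddHaarMeasure (η : Measure E) [η.IsAddHaarMeasure]
    {A : E →ₗ[ℝ] E} (hA : LinearMap.det A ≠ 0) :
    η.map A = ENNReal.ofReal |(LinearMap.det A)⁻¹| • η := by
  let e : E ≃L[ℝ] (Fin (Module.finrank ℝ E) → ℝ) := ContinuousLinearEquiv.ofFinrankEq (by simp)
  have he : Measurable e := e.continuous.measurable
  have he' : Measurable e.symm := e.symm.continuous.measurable
  have : (η.map e).IsAddHaarMeasure := e.isAddHaarMeasure_map η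
  have hmap := Measure.map_linearMap_addHaar_eq_smul_addHaar (η.map e)
    ((LinearMap.det_conj A e.toLinearEquiv).symm ▸ hA)
  rw [LinearMap.det_conj, Measure.map_map (LinearMap.continuous_on_pi _).measurable he] at hmap
  have hback := congrArg (Measure.map e.symm) hmap
  rw [Measure.map_smul, Measure.map_map he' he, Measure.map_map he'
    ((LinearMap.continuous_on_pi _).measurable.comp he)] at hback
  convert hback using 1
  · congr 1
    ext x
    simp
  · simp [Function.comp_def]

end AddHaar

section Laplace

open Matrix

variable {r : ℕ}

/-- The Laplace transform `t ↦ ∫ exp (-tr (t s)) dν(s)` of a measure on symmetric matrices. It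
takes values in `[0, ∞]`, so that no integrability is presupposed. -/
noncomputable def laplace (ν : Measure (SymMat r)) (t : Matrix (Fin r) (Fin r) ℝ) : ℝ≥0∞ :=
  ∫⁻ s, ENNReal.ofReal (Real.exp (-(t * s.1).trace)) ∂ν

theorem continuous_trace_mul (t : Matrix (Fin r) (Fin r) ℝ) :
    Continuous fun s : SymMat r => (t * s.1).trace := by
  fun_prop

theorem measurable_exp_neg_trace_mul (t : Matrix (Fin r) (Fin r) ℝ) :
    Measurable fun s : SymMat r => ENNReal.ofReal (Real.exp (-(t * s.1).trace)) :=
  ((continuous_trace_mul t).neg.rexp.measurable).ennreal_ofReal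

theorem laplace_congruence (ν : Measure (SymMat r)) (h t : Matrix (Fin r) (Fin r) ℝ) :
    laplace (ν.map (congruence h)) t = laplace ν (h * t * hᵀ) := by
  rw [laplace, lintegral_map (measurable_exp_neg_trace_mul t) (measurable_congruence h)]
  refine lintegral_congr fun s => ?_
  rw [coe_congruence, ← Matrix.mul_assoc, trace_mul_comm, Matrix.mul_assoc h, Matrix.mul_assoc h,
    ← Matrix.mul_assoc t]

theorem laplace_smul (c : ℝ≥0∞) (ν : Measure (SymMat r)) (t : Matrix (Fin r) (Fin r) ℝ) :
    laplace (c • ν) t = c * laplace ν t :=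
  lintegral_smul_measure _ _

theorem laplace_ne_zero {ν : Measure (SymMat r)} (hν : ν ≠ 0) (t : Matrix (Fin r) (Fin r) ℝ) :
    laplace ν t ≠ 0 := by
  rw [laplace, Ne, lintegral_eq_zero_iff (measurable_exp_neg_trace_mul t)]
  intro h
  refine hν (ae_eq_bot.1 (Filter.eventually_false_iff_eq_bot.1 ?_))
  filter_upwards [h] with s hs
  exact (ENNReal.ofReal_pos.2 (Real.exp_pos _)).ne' hs

theorem laplace_withDensity (ν : Measure (SymMat r)) (t u : Matrix (Fin r) (Fin r) ℝ) :
    laplace (ν.withDensity fun s => ENNReal.ofReal (Real.exp (-(t * s.1).trace))) u =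
      laplace ν (t + u) := by
  rw [laplace, lintegral_withDensity_eq_lintegral_mul _ (measurable_exp_neg_trace_mul t)
    (measurable_exp_neg_trace_mul u)]
  refine lintegral_congr fun s => ?_
  rw [Pi.mul_apply, ← ENNReal.ofReal_mul (Real.exp_pos _).le, ← Real.exp_add, Matrix.add_mul,
    trace_add, neg_add]

theorem lintegral_laplace_one_add (ν κ : Measure (SymMat r)) [SFinite ν] [SFinite κ] :
    ∫⁻ p, laplace ν (1 + p.1) ∂κ =
      ∫⁻ s, ENNReal.ofReal (Real.exp (-s.1.trace)) * laplace κ s.1 ∂ν := by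
  have hmeas : Measurable fun q : SymMat r × SymMat r =>
      ENNReal.ofReal (Real.exp (-((1 + q.1.1) * q.2.1).trace)) :=
    (Continuous.measurable (by fun_prop)).ennreal_ofReal
  simp only [laplace]
  rw [lintegral_lintegral_swap hmeas.aemeasurable]
  refine lintegral_congr fun s => ?_
  rw [← lintegral_const_mul _ (measurable_exp_neg_trace_mul _)]
  refine lintegral_congr fun p => ?_
  rw [← ENNReal.ofReal_mul (Real.exp_pos _).le, ← Real.exp_add, Matrix.add_mul, Matrix.one_mul,
    trace_add, neg_add, trace_mul_comm p.1]

open BoundedContinuousFunction in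
/-- The characters `s ↦ exp (-tr (t s))` of the cone of positive semidefinite matrices, for `t`
positive semidefinite. -/
def exponentials (r : ℕ) : Submonoid ({s : SymMat r // s.1.PosSemidef} →ᵇ ℝ) where
  carrier := {f | ∃ t : Matrix (Fin r) (Fin r) ℝ, t.PosSemidef ∧
    ∀ s, f s = Real.exp (-(t * s.1.1).trace)}
  one_mem' := ⟨0, PosSemidef.zero, by simp⟩
  mul_mem' := by
    rintro f g ⟨t, ht, hf⟩ ⟨u, hu, hg⟩
    refine ⟨t + u, ht.add hu, fun s => ?_⟩
    rw [BoundedContinuousFunction.mul_apply, hf, hg, ← Real.exp_add, Matrix.add_mul, trace_add,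
      neg_add]

theorem exists_mem_exponentials {t : Matrix (Fin r) (Fin r) ℝ} (ht : t.PosSemidef) :
    ∃ f ∈ exponentials r, ∀ s, f s = Real.exp (-(t * s.1.1).trace) :=
  ⟨.ofNormedAddCommGroup (fun s => Real.exp (-(t * s.1.1).trace))
    (((continuous_trace_mul t).comp continuous_subtype_val).neg.rexp) 1 fun s => by
      rw [Real.norm_of_nonneg (Real.exp_pos _).le, Real.exp_le_one_iff, neg_nonpos]
      exact trace_mul_nonneg ht s.2, ⟨t, ht, fun _ => rfl⟩, fun _ => rfl⟩

theorem exists_exponentials_apply_ne {s t : {s : SymMat r // s.1.PosSemidef}} (hst : s ≠ t) :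
    ∃ f ∈ exponentials r, f s ≠ f t := by
  by_contra! h
  refine hst (Subtype.ext (eq_of_forall_trace_vecMulVec_mul_eq fun x => ?_))
  obtain ⟨f, hf, hfx⟩ := exists_mem_exponentials (posSemidef_vecMulVec_self_star x)
  have hfst := h f hf
  rw [hfx, hfx, Real.exp_eq_exp] at hfst
  simpa using hfst

theorem exists_map_coe_eq {ν : Measure (SymMat r)} [IsFiniteMeasure ν]
    (hν : ∀ᵐ s ∂ν, s.1.PosSemidef) : ∃ P : Measure {s : SymMat r // s.1.PosSemidef},
      IsFiniteMeasure P ∧ P.map Subtype.val = ν :=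
  ⟨ν.comap Subtype.val, inferInstance,
    (map_comap_subtype_coe isClosed_setOf_posSemidef.measurableSet ν).trans
      (Measure.restrict_eq_self_of_ae_mem hν)⟩

theorem ext_of_laplace_eq_of_isFiniteMeasure {ν ν' : Measure (SymMat r)} [IsFiniteMeasure ν]
    [IsFiniteMeasure ν'] (hν : ∀ᵐ s ∂ν, s.1.PosSemidef) (hν' : ∀ᵐ s ∂ν', s.1.PosSemidef)
    (h : ∀ t, t.PosSemidef → laplace ν t = laplace ν' t) : ν = ν' := by
  obtain ⟨P, hP, rfl⟩ := exists_map_coe_eq hν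
  obtain ⟨P', hP', rfl⟩ := exists_map_coe_eq hν'
  have : PolishSpace {s : SymMat r // s.1.PosSemidef} := isClosed_setOf_posSemidef.polishSpace
  congr 1
  refine ext_of_integral_eq_of_submonoid (exponentials r)
    (fun _ _ => exists_exponentials_apply_ne) ?_
  rintro f ⟨t, ht, hf⟩
  have hlaplace (Q : Measure {s : SymMat r // s.1.PosSemidef}) :
      ∫ s, f s ∂Q = (laplace (Q.map Subtype.val) t).toReal := by
    rw [laplace, lintegral_map (measurable_exp_neg_trace_mul t) measurable_subtype_coe,
      integral_eq_lintegral_of_nonneg_ae (.of_forall fun s => hf s ▸ (Real.exp_pos _).le)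
        f.continuous.aestronglyMeasurable]
    simp only [hf]
  rw [hlaplace, hlaplace, h t ht]

theorem ext_of_laplace_eq {ν ν' : Measure (SymMat r)} (hν : ∀ᵐ s ∂ν, s.1.PosSemidef)
    (hν' : ∀ᵐ s ∂ν', s.1.PosSemidef) (hfin : laplace ν 1 ≠ ∞)
    (h : ∀ t, t.PosDef → laplace ν t = laplace ν' t) : ν = ν' := by
  let ρ : SymMat r → ℝ≥0∞ := fun s => ENNReal.ofReal (Real.exp (-(1 * s.1).trace))
  have hρ : Measurable ρ := measurable_exp_neg_trace_mul 1
  have recover (κ : Measure (SymMat r)) : (κ.withDensity ρ).withDensity ρ⁻¹ = κ :=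
    withDensity_inv_same hρ (.of_forall fun s => (ENNReal.ofReal_pos.2 (Real.exp_pos _)).ne')
      (.of_forall fun s => ENNReal.ofReal_ne_top)
  have hac (κ : Measure (SymMat r)) : κ.withDensity ρ ≪ κ := withDensity_absolutelyContinuous κ ρ
  have : IsFiniteMeasure (ν.withDensity ρ) := isFiniteMeasure_withDensity hfin
  have : IsFiniteMeasure (ν'.withDensity ρ) :=
    isFiniteMeasure_withDensity ((h 1 PosDef.one).symm.trans_ne hfin)
  have weighted : ν.withDensity ρ = ν'.withDensity ρ := by
    refine ext_of_laplace_eq_of_isFiniteMeasure ((hac ν).ae_le hν) ((hac ν').ae_le hν')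
      fun t ht => ?_
    rw [laplace_withDensity, laplace_withDensity, h _ (PosDef.one.add_posSemidef ht)]
  rw [← recover ν, weighted, recover ν']

end Laplace

section RelativelyInvariant

open Matrix

variable {r : ℕ} {d : ℝ} {ν ν' : Measure (SymMat r)}

/-- A measure on symmetric matrices is relatively invariant of degree `d` if the congruence by
each positive definite `h` scales it by `(det h)⁻ᵈ`. -/
def IsRelativelyInvariant (d : ℝ) (ν : Measure (SymMat r)) : Prop :=
  ∀ h : Matrix (Fin r) (Fin r) ℝ, h.PosDef →
    ν.map (congruence h) = ENNReal.ofReal (h.det ^ (-d)) • ν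

theorem IsRelativelyInvariant.laplace_eq (hν : IsRelativelyInvariant d ν)
    {t : Matrix (Fin r) (Fin r) ℝ} (ht : t.PosDef) :
    laplace ν t = ENNReal.ofReal (t.det ^ (-d / 2)) * laplace ν 1 := by
  obtain ⟨h, hh, rfl⟩ := exists_posDef_mul_self_eq ht
  have hsymm : hᵀ = h := by simpa [conjTranspose_eq_transpose_of_trivial] using hh.isHermitian.eq
  have hdet : (h * h).det ^ (-d / 2) = h.det ^ (-d) := by
    rw [det_mul, ← sq, ← Real.rpow_natCast, ← Real.rpow_mul hh.det_pos.le]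
    congr 1
    push_cast
    ring
  rw [hdet, ← laplace_smul, ← hν h hh, laplace_congruence, hsymm, Matrix.mul_one]

theorem IsRelativelyInvariant.laplace_one_lt_top (hν : IsRelativelyInvariant d ν)
    {t : Matrix (Fin r) (Fin r) ℝ} (ht : t.PosDef)
    (hfin : laplace ν t < ∞) : laplace ν 1 < ∞ := by
  rw [hν.laplace_eq ht] at hfin
  exact ENNReal.lt_top_of_mul_ne_top_right hfin.ne
    (ENNReal.ofReal_pos.2 (Real.rpow_pos_of_pos ht.det_pos _)).ne'

theorem IsRelativelyInvariant.eq_smul (hν : IsRelativelyInvariant d ν)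
    (hν' : IsRelativelyInvariant d ν') (hpos : ∀ᵐ s ∂ν, s.1.PosSemidef)
    (hpos' : ∀ᵐ s ∂ν', s.1.PosSemidef) (hfin : laplace ν 1 ≠ ∞) (hfin' : laplace ν' 1 ≠ ∞)
    (hν0' : ν' ≠ 0) : ν = (laplace ν 1 / laplace ν' 1) • ν' := by
  refine ext_of_laplace_eq hpos (Measure.smul_absolutelyContinuous.ae_le hpos') hfin fun t ht => ?_
  rw [laplace_smul, hν.laplace_eq ht, hν'.laplace_eq ht, mul_left_comm,
    ENNReal.div_mul_cancel (laplace_ne_zero hν0' 1) hfin']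

theorem isRelativelyInvariant_of_isAddHaarMeasure (μ : Measure (SymMat r)) [μ.IsAddHaarMeasure] :
    IsRelativelyInvariant (r + 1) μ := by
  intro h hh
  have hpos := hh.det_pos
  have hdet := det_congruence hh.isHermitian
  rw [map_linearMap_eq_smul_of_isAddHaarMeasure μ (hdet ▸ (pow_pos hpos _).ne'), hdet,
    abs_of_pos (inv_pos.2 (pow_pos hpos _)), Real.rpow_neg hpos.le, ← Nat.cast_add_one,
    Real.rpow_natCast]

end RelativelyInvariant

section GramMeasure

variable {r : ℕ} {m : Type*} [Fintype m] (η : Measure (Matrix m (Fin r) ℝ))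

theorem ae_posSemidef_map_gramMatrix : ∀ᵐ s ∂η.map gramMatrix, s.1.PosSemidef :=
  (ae_map_iff measurable_gramMatrix.aemeasurable isClosed_setOf_posSemidef.measurableSet).2
    (.of_forall posSemidef_gramMatrix)

theorem map_gramMatrix_ne_zero [η.IsAddHaarMeasure] : η.map gramMatrix ≠ 0 :=
  (Measure.map_ne_zero_iff measurable_gramMatrix.aemeasurable).2 (NeZero.ne η)

theorem isRelativelyInvariant_map_gramMatrix [η.IsAddHaarMeasure] :
    IsRelativelyInvariant (Fintype.card m) (η.map gramMatrix) := by
  intro h hh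
  have hmul : Measurable (mulRightLinearMap m ℝ h) :=
    (LinearMap.continuous_of_finiteDimensional _).measurable
  have hcomp : congruence h ∘ gramMatrix = gramMatrix ∘ mulRightLinearMap m ℝ h :=
    funext (congruence_gramMatrix h)
  have hdet : LinearMap.det (mulRightLinearMap m ℝ h) ≠ 0 := by
    rw [det_mulRightLinearMap]
    exact pow_ne_zero _ hh.det_pos.ne'
  rw [Measure.map_map (measurable_congruence h) measurable_gramMatrix, hcomp,
    ← Measure.map_map measurable_gramMatrix hmul, map_linearMap_eq_smul_of_isAddHaarMeasure η hdet,
    Measure.map_smul, det_mulRightLinearMap, Real.rpow_neg hh.det_pos.le, Real.rpow_natCast,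
    abs_of_pos (inv_pos.2 (pow_pos hh.det_pos _))]

theorem laplace_map_gramMatrix_one_lt_top [η.IsAddHaarMeasure] :
    laplace (η.map gramMatrix) 1 < ∞ := by
  rw [laplace, lintegral_map (measurable_exp_neg_trace_mul 1) measurable_gramMatrix,
    ← setLIntegral_univ]
  refine lintegral_exp_neg_lt_top_of_norm_le (C := 1) η (matrixEquiv m (Fin r)).symm .univ
    fun X _ => ?_
  obtain ⟨v, rfl⟩ := (matrixEquiv m (Fin r)).surjective X
  rw [one_mul, trace_gramMatrix_matrixEquiv, ContinuousLinearEquiv.symm_apply_apply]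
  refine (pi_norm_le_iff_of_nonneg (by positivity)).2 fun p => ?_
  have := Finset.single_le_sum (fun q _ => sq_nonneg (v q)) (Finset.mem_univ p)
  rw [Real.norm_eq_abs]
  nlinarith [sq_abs (v p), sq_nonneg (|v p| - 1)]

end GramMeasure

section ConeMeasure

open Matrix

variable {r : ℕ}

/-- The measure `det(s)ᵃ dμ(s)` on the cone of positive definite matrices. -/
noncomputable def coneMeasure (μ : Measure (SymMat r)) (a : ℝ) : Measure (SymMat r) :=
  (μ.restrict {s | s.1.PosDef}).withDensity fun s => ENNReal.ofReal (s.1.det ^ a)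

theorem ae_posDef_coneMeasure (μ : Measure (SymMat r)) (a : ℝ) :
    ∀ᵐ s ∂coneMeasure μ a, s.1.PosDef :=
  (withDensity_absolutelyContinuous _ _).ae_le (ae_restrict_mem measurableSet_setOf_posDef)

theorem withDensity_coneMeasure (μ : Measure (SymMat r)) (a b : ℝ) :
    (coneMeasure μ a).withDensity (fun s => ENNReal.ofReal (s.1.det ^ b)) =
      coneMeasure μ (a + b) := by
  rw [coneMeasure, ← withDensity_mul _ (measurable_ofReal_det_rpow a)
    (measurable_ofReal_det_rpow b)]
  refine withDensity_congr_ae ?_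
  filter_upwards [ae_restrict_mem measurableSet_setOf_posDef] with s hs
  rw [Pi.mul_apply, ← ENNReal.ofReal_mul (Real.rpow_nonneg (PosDef.det_pos hs).le a),
    Real.rpow_add (PosDef.det_pos hs)]

open Classical in
theorem withDensity_smul_coneMeasure (μ : Measure (SymMat r)) (a : ℝ) {c : ℝ} (hc : 0 ≤ c)
    {f : SymMat r → ℝ} (hf : Measurable f) :
    (ENNReal.ofReal c • coneMeasure μ a).withDensity (fun s => ENNReal.ofReal (f s)) =
      μ.withDensity fun s => ENNReal.ofReal
        (if s.1.PosDef then c * f s * s.1.det ^ a else 0) := by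
  rw [withDensity_smul_measure, coneMeasure, ← withDensity_mul _ (measurable_ofReal_det_rpow a)
    hf.ennreal_ofReal, ← withDensity_indicator measurableSet_setOf_posDef,
    ← withDensity_smul' _ _ ENNReal.ofReal_ne_top]
  congr with s
  by_cases hs : s.1.PosDef
  · simp only [Pi.smul_apply, Set.indicator_of_mem (show s ∈ {s : SymMat r | s.1.PosDef} from hs),
      Pi.mul_apply, smul_eq_mul, if_pos hs]
    rw [← ENNReal.ofReal_mul (Real.rpow_nonneg hs.det_pos.le a), ← ENNReal.ofReal_mul hc,
      mul_assoc, mul_comm (f s)]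
  · simp [hs]

instance sFinite_coneMeasure (μ : Measure (SymMat r)) [SFinite μ] (a : ℝ) :
    SFinite (coneMeasure μ a) := by
  unfold coneMeasure
  infer_instance

theorem measure_setOf_posDef_ne_zero (μ : Measure (SymMat r)) [μ.IsAddHaarMeasure] :
    μ {s | s.1.PosDef} ≠ 0 := by
  intro h0
  have hcover : ⋃ n : ℕ,
      (fun s : SymMat r => s + (n : ℝ) • gramMatrix (1 : Matrix (Fin r) (Fin r) ℝ)) ⁻¹'
        {s | s.1.PosDef} = Set.univ :=
    Set.eq_univ_of_forall fun s => Set.mem_iUnion.2 <| by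
      simpa using exists_nat_posDef_add_smul_one (isHermitian_coe s)
  refine NeZero.ne (μ Set.univ) ?_
  rw [← hcover, measure_iUnion_null fun n => ?_]
  rw [measure_preimage_add_right, h0]

theorem coneMeasure_ne_zero (μ : Measure (SymMat r)) [μ.IsAddHaarMeasure] (a : ℝ) :
    coneMeasure μ a ≠ 0 := by
  rw [coneMeasure, Ne, withDensity_eq_zero_iff (measurable_ofReal_det_rpow a).aemeasurable]
  intro h0
  refine measure_setOf_posDef_ne_zero μ (Measure.restrict_eq_zero.1 (ae_eq_bot.1
    (Filter.eventually_false_iff_eq_bot.1 ?_)))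
  filter_upwards [h0, ae_restrict_mem measurableSet_setOf_posDef] with s hs hpos
  exact (ENNReal.ofReal_pos.2 (Real.rpow_pos_of_pos hpos.det_pos a)).ne' hs

theorem det_rpow_eq_congruence {h : Matrix (Fin r) (Fin r) ℝ} (hh : h.PosDef) {s : SymMat r}
    (hs : s.1.PosDef) (a : ℝ) :
    s.1.det ^ a = h.det ^ (-(2 * a)) * (congruence h s).1.det ^ a := by
  have hpos := hh.det_pos
  rw [coe_congruence, det_mul, det_mul, det_transpose, mul_right_comm, ← sq,
    Real.mul_rpow (by positivity) hs.det_pos.le, ← Real.rpow_natCast, ← Real.rpow_mul hpos.le,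
    ← mul_assoc, ← Real.rpow_add hpos]
  simp

theorem isRelativelyInvariant_coneMeasure (μ : Measure (SymMat r)) [μ.IsAddHaarMeasure] (a : ℝ) :
    IsRelativelyInvariant (2 * a + r + 1) (coneMeasure μ a) := by
  intro h hh
  have hpos := hh.det_pos
  have hcone : {s : SymMat r | s.1.PosDef} = congruence h ⁻¹' {s | s.1.PosDef} :=
    Set.ext fun s => (posDef_congruence_iff hh.isUnit s).symm
  have hdensity : coneMeasure μ a = ENNReal.ofReal (h.det ^ (-(2 * a))) •
      (μ.restrict {s | s.1.PosDef}).withDensity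
        ((fun s : SymMat r => ENNReal.ofReal (s.1.det ^ a)) ∘ congruence h) := by
    rw [← withDensity_smul _ ((measurable_ofReal_det_rpow a).comp (measurable_congruence h))]
    refine withDensity_congr_ae ?_
    filter_upwards [ae_restrict_mem measurableSet_setOf_posDef] with s hs
    rw [Pi.smul_apply, Function.comp_apply, smul_eq_mul, ← ENNReal.ofReal_mul (by positivity),
      det_rpow_eq_congruence hh hs]
  calc (coneMeasure μ a).map (congruence h)
      = ENNReal.ofReal (h.det ^ (-(2 * a))) • ((μ.map (congruence h)).restrict
          {s | s.1.PosDef}).withDensity fun s => ENNReal.ofReal (s.1.det ^ a) := by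
        rw [hdensity, Measure.map_smul, map_withDensity_comp _ (measurable_congruence h)
          (measurable_ofReal_det_rpow a), Measure.restrict_map (measurable_congruence h)
          measurableSet_setOf_posDef, ← hcone]
    _ = ENNReal.ofReal (h.det ^ (-(2 * a + r + 1))) • coneMeasure μ a := by
        rw [isRelativelyInvariant_of_isAddHaarMeasure μ h hh, Measure.restrict_smul,
          withDensity_smul_measure, smul_smul, coneMeasure,
          ← ENNReal.ofReal_mul (by positivity), ← Real.rpow_add hpos]
        ring_nf

theorem laplace_restrict_posDef_one_lt_top (μ : Measure (SymMat r)) [μ.IsAddHaarMeasure] :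
    laplace (μ.restrict {s | s.1.PosDef}) 1 < ∞ := by
  simp only [laplace, one_mul]
  exact lintegral_exp_neg_lt_top_of_norm_le (C := 0) μ (upperEntries r).toContinuousLinearEquiv
    measurableSet_setOf_posDef fun s hs => by
      simpa using norm_upperEntries_le_trace (PosDef.posSemidef hs)

theorem laplace_coneMeasure_one_lt_top_of_nonneg (μ : Measure (SymMat r)) [μ.IsAddHaarMeasure]
    {a : ℝ} (ha : 0 ≤ a) : laplace (coneMeasure μ a) 1 < ∞ := by
  have hbound (s : SymMat r) (hs : s.1.PosDef) :
      s.1.det ^ a * Real.exp (-(((1 + a) • (1 : Matrix (Fin r) (Fin r) ℝ)) * s.1).trace) ≤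
        Real.exp (-(1 * s.1).trace) := by
    have hdet := Real.rpow_le_rpow hs.det_pos.le (det_le_exp_trace hs.posSemidef) ha
    rw [← Real.exp_mul] at hdet
    have htrace : -(1 * s.1).trace = s.1.trace * a +
        -(((1 + a) • (1 : Matrix (Fin r) (Fin r) ℝ)) * s.1).trace := by
      rw [Matrix.smul_mul, Matrix.one_mul, trace_smul, smul_eq_mul]
      ring
    rw [htrace, Real.exp_add]
    gcongr
  refine (isRelativelyInvariant_coneMeasure μ a).laplace_one_lt_top
    (PosDef.one.smul (by positivity : 0 < 1 + a)) ?_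
  rw [laplace, coneMeasure, lintegral_withDensity_eq_lintegral_mul _
    (measurable_ofReal_det_rpow a) (measurable_exp_neg_trace_mul _)]
  refine (setLIntegral_mono' measurableSet_setOf_posDef fun s hs => ?_).trans_lt
    (laplace_restrict_posDef_one_lt_top μ)
  rw [Pi.mul_apply, ← ENNReal.ofReal_mul (Real.rpow_nonneg hs.det_pos.le a)]
  exact ENNReal.ofReal_le_ofReal (hbound s hs)

theorem IsRelativelyInvariant.laplace_coneMeasure_mul_laplace {d : ℝ} {ρ : Measure (SymMat r)}
    [SFinite ρ] (hρ : IsRelativelyInvariant d ρ) (μ : Measure (SymMat r)) [SFinite μ] (a : ℝ) :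
    laplace (coneMeasure μ (a - d / 2)) 1 * laplace ρ 1 =
      ∫⁻ p, laplace (coneMeasure μ a) (1 + p.1) ∂ρ := by
  have hmeas := measurable_exp_neg_trace_mul (r := r) 1
  rw [lintegral_laplace_one_add, laplace, sub_eq_add_neg, ← withDensity_coneMeasure,
    lintegral_withDensity_eq_lintegral_mul _ (measurable_ofReal_det_rpow _) hmeas,
    ← lintegral_mul_const _ ((measurable_ofReal_det_rpow _).mul hmeas)]
  refine lintegral_congr_ae ?_
  filter_upwards [ae_posDef_coneMeasure μ a] with s hs
  rw [Pi.mul_apply, hρ.laplace_eq hs, Matrix.one_mul,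
    mul_comm (ENNReal.ofReal (s.1.det ^ _)), mul_assoc, neg_div]

theorem lintegral_det_one_add_rpow_lt_top {d : ℝ} (hd : r < d) :
    ∫⁻ p, ENNReal.ofReal ((1 + p.1).det ^ (-d / 2))
      ∂(matrixVolume Unit (Fin r)).map gramMatrix < ∞ := by
  have hmeas : Measurable fun p : SymMat r => ENNReal.ofReal ((1 + p.1).det ^ (-d / 2)) :=
    ((Continuous.matrix_det (by fun_prop)).measurable.pow_const _).ennreal_ofReal
  have hd0 : 0 < d := (Nat.cast_nonneg r).trans_lt hd
  rw [matrixVolume, Measure.map_map measurable_gramMatrix measurable_matrixEquiv,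
    lintegral_map hmeas (measurable_gramMatrix.comp measurable_matrixEquiv)]
  refine (lintegral_mono fun v => ENNReal.ofReal_le_ofReal ?_).trans_lt
    (integrable_rpow_neg_one_add_norm_sq (E := Unit × Fin r → ℝ) (r := d)
      (by simpa)).lintegral_lt_top
  rw [Function.comp_apply, det_one_add_gramMatrix, trace_gramMatrix_matrixEquiv]
  exact Real.rpow_le_rpow_of_nonpos (by positivity) (by gcongr; exact norm_sq_le_sum_sq v)
    (by linarith only [hd0])

theorem laplace_coneMeasure_sub_half_one_lt_top (μ : Measure (SymMat r)) [μ.IsAddHaarMeasure]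
    {a : ℝ} (ha : 0 ≤ a) : laplace (coneMeasure μ (a - 1 / 2)) 1 < ∞ := by
  have hρ : IsRelativelyInvariant 1 ((matrixVolume Unit (Fin r)).map gramMatrix) := by
    simpa using isRelativelyInvariant_map_gramMatrix (matrixVolume Unit (Fin r))
  have hrank_one : ∫⁻ p, laplace (coneMeasure μ a) (1 + p.1)
      ∂(matrixVolume Unit (Fin r)).map gramMatrix < ∞ := by
    have hscale : ∀ᵐ p ∂(matrixVolume Unit (Fin r)).map gramMatrix,
        laplace (coneMeasure μ a) (1 + p.1) =
          ENNReal.ofReal ((1 + p.1).det ^ (-(2 * a + r + 1) / 2)) *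
            laplace (coneMeasure μ a) 1 := by
      filter_upwards [ae_posSemidef_map_gramMatrix _] with p hp
      exact (isRelativelyInvariant_coneMeasure μ a).laplace_eq (PosDef.one.add_posSemidef hp)
    have hone := laplace_coneMeasure_one_lt_top_of_nonneg μ ha
    rw [lintegral_congr_ae hscale, lintegral_mul_const' _ _ hone.ne]
    exact ENNReal.mul_lt_top (lintegral_det_one_add_rpow_lt_top (by linarith)) hone
  refine ENNReal.lt_top_of_mul_ne_top_left ?_
    (laplace_ne_zero (map_gramMatrix_ne_zero (matrixVolume Unit (Fin r))) 1)
  exact (hρ.laplace_coneMeasure_mul_laplace μ a).trans_ne hrank_one.ne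

end ConeMeasure

theorem exists_map_gramMatrix_eq_smul {m : Type*} [Fintype m] {r : ℕ} (hr : r ≤ Fintype.card m)
    (η : Measure (Matrix m (Fin r) ℝ)) [η.IsAddHaarMeasure] (μ : Measure (SymMat r))
    [μ.IsAddHaarMeasure] : ∃ c : ℝ, 0 < c ∧ η.map gramMatrix =
      ENNReal.ofReal c • coneMeasure μ (((Fintype.card m : ℝ) - r - 1) / 2) := by
  set a : ℝ := ((Fintype.card m : ℝ) - r - 1) / 2 with ha
  have hcone : IsRelativelyInvariant (Fintype.card m) (coneMeasure μ a) := by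
    convert isRelativelyInvariant_coneMeasure μ a using 1
    rw [ha]
    ring
  have hfin := laplace_map_gramMatrix_one_lt_top η
  have hfin_cone : laplace (coneMeasure μ a) 1 < ∞ := by
    convert laplace_coneMeasure_sub_half_one_lt_top μ (a := a + 1 / 2) ?_ using 3
    · ring
    · have : (r : ℝ) ≤ Fintype.card m := mod_cast hr
      rw [ha]
      linarith
  have hne := laplace_ne_zero (map_gramMatrix_ne_zero η) 1
  have hcone0 := coneMeasure_ne_zero μ a
  have hc : laplace (η.map gramMatrix) 1 / laplace (coneMeasure μ a) 1 ≠ ∞ :=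
    ENNReal.div_ne_top hfin.ne (laplace_ne_zero hcone0 1)
  refine ⟨_, ENNReal.toReal_pos (ENNReal.div_ne_zero.2 ⟨hne, hfin_cone.ne⟩) hc, ?_⟩
  rw [ENNReal.ofReal_toReal hc]
  exact (isRelativelyInvariant_map_gramMatrix η).eq_smul hcone (ae_posSemidef_map_gramMatrix η)
    ((ae_posDef_coneMeasure μ a).mono fun _ => Matrix.PosDef.posSemidef) hfin.ne hfin_cone.ne hcone0

theorem pi_gaussianReal_eq_withDensity (ι : Type*) [Fintype ι] :
    (Measure.pi fun _ : ι => gaussianReal 0 1) =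
      (volume : Measure (ι → ℝ)).withDensity fun v =>
        ENNReal.ofReal ((√(2 * Real.pi))⁻¹ ^ Fintype.card ι *
          Real.exp (-(∑ i, v i ^ 2) / 2)) := by
  rw [gaussianReal_of_var_ne_zero 0 one_ne_zero]
  refine (pi_withDensity_ofReal (fun _ : ι => volume)
    (fun _ => integrable_gaussianPDFReal 0 1) fun _ => gaussianPDFReal_nonneg 0 1).trans ?_
  congr with v
  simp [gaussianPDFReal_def, Finset.prod_mul_distrib, ← Real.exp_sum, Finset.sum_div,
    Finset.sum_neg_distrib, neg_div]

theorem map_gramMatrix_pi_gaussianReal (m : Type*) [Fintype m] (r : ℕ) :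
    (Measure.pi fun _ : m × Fin r => gaussianReal 0 1).map
        (fun v => gramMatrix (matrixEquiv m (Fin r) v)) =
      ((matrixVolume m (Fin r)).map gramMatrix).withDensity fun s =>
        ENNReal.ofReal ((√(2 * Real.pi))⁻¹ ^ Fintype.card (m × Fin r) *
          Real.exp (-s.1.trace / 2)) := by
  rw [pi_gaussianReal_eq_withDensity, matrixVolume,
    Measure.map_map measurable_gramMatrix measurable_matrixEquiv,
    ← map_withDensity_comp _ (measurable_gramMatrix.comp measurable_matrixEquiv)
      (Continuous.measurable (by fun_prop)).ennreal_ofReal]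
  simp only [Function.comp_def, trace_gramMatrix_matrixEquiv]

open Classical in
/-- If the entries of an `N × r` real matrix `X` are i.i.d. standard Gaussians, then
`XᵀX`, as a random element of `Sym_r(ℝ)`, has density proportional to
`exp(−tr(s)/2)·det(s)^{(N−r−1)/2}·1_{s ≻ 0}` with respect to an additive Haar measure `μ`
on `Sym_r(ℝ)`: that is, `XᵀX` is Wishart with shape `N` and identity scale. -/
theorem gaussian_quadratic_is_wishart {N r : ℕ} (hr : 1 ≤ r) (hNr : r ≤ N)
    (μ : Measure (SymMat r)) [μ.IsAddHaarMeasure] :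
    ∃ c : ℝ, 0 < c ∧
      (Measure.pi fun _ : Fin N × Fin r => gaussianReal 0 1).map
        (fun v : Fin N × Fin r → ℝ =>
          (⟨(Matrix.of fun i j => v (i, j))ᵀ * (Matrix.of fun i j => v (i, j)),
            transpose_mul_self_mem_symMatSubmodule _⟩ : SymMat r)) =
      μ.withDensity fun s : SymMat r => ENNReal.ofReal
        (if (s : Matrix (Fin r) (Fin r) ℝ).PosDef then
          c * Real.exp (-(s : Matrix (Fin r) (Fin r) ℝ).trace / 2) *
            (s : Matrix (Fin r) (Fin r) ℝ).det ^ (((N : ℝ) - r - 1) / 2)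
        else 0) := by
  obtain ⟨c, hc, hmap⟩ := exists_map_gramMatrix_eq_smul (by simpa) (matrixVolume (Fin N) (Fin r)) μ
  let C : ℝ := (√(2 * Real.pi))⁻¹ ^ Fintype.card (Fin N × Fin r)
  refine ⟨c * C, by positivity, (map_gramMatrix_pi_gaussianReal (Fin N) r).trans ?_⟩
  rw [hmap, withDensity_smul_coneMeasure μ _ hc.le (Continuous.measurable (by fun_prop)),
    Fintype.card_fin]
  simp only [C, mul_assoc]
end

section
/- Let n > 2 be an integer and η > n−2 a real number. On ℝ × ℝ^{n−1} with Lebesgue measure, let W be the measure with density w(t, x) = exp(−t) · (t² − ‖x‖²)^{η/2 − n/2} · 1_{t > ‖x‖}, where ‖·‖ is the Euclidean norm on ℝ^{n−1} and the power is the real power of a positive real. Then there exists a constant c > 0 such that the pushforward of W under the map (t, x) ↦ (t + ‖x‖, t − ‖x‖) ∈ ℝ² equals the measure on ℝ² with density (ξ₁, ξ₂) ↦ c · 1_{ξ₁ > ξ₂ > 0} · exp(−(ξ₁ + ξ₂)/2) · (ξ₁ξ₂)^{η/2 − n/2} · (ξ₁ − ξ₂)^{n−2} with respect to Lebesgue measure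 on ℝ². -/
open MeasureTheory
open scoped ENNReal

/-! The eigenvalue map factors as `(t, x) ↦ (t, ‖x‖)` followed by `(t, r) ↦ (t + r, t - r)`. In
polar coordinates the norm carries Lebesgue measure to a multiple of `r ^ (dim E - 1) dr` on
`r > 0`, and the second map is linear with determinant `-2` and inverse given by
`t = (ξ₁ + ξ₂) / 2` and `r = (ξ₁ - ξ₂) / 2`: this produces the factor `(ξ₁ - ξ₂) ^ (n - 2)`. The
Wishart density is a function of the eigenvalues alone, because `2 t = ξ₁ + ξ₂` and
`t² - ‖x‖² = ξ₁ ξ₂`, and `t > ‖x‖` means `ξ₂ > 0`, so it passes through the pushforward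
unchanged. -/

open Set Module

theorem map_withDensity_comp_s19 {α β : Type*} [MeasurableSpace α] [MeasurableSpace β]
    (μ : Measure α) {φ : α → β} (hφ : Measurable φ) {g : β → ℝ≥0∞} (hg : Measurable g) :
    (μ.withDensity fun a => g (φ a)).map φ = (μ.map φ).withDensity g := by
  ext s hs
  rw [Measure.map_apply hφ hs, withDensity_apply _ (hφ hs), withDensity_apply _ hs,
    setLIntegral_map hs hg hφ]

theorem map_coe_volumeIoiPow (k : ℕ) :
    (Measure.volumeIoiPow k).map (↑) =
      (volume.restrict (Ioi 0)).withDensity fun r : ℝ => ENNReal.ofReal (r ^ k) := by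
  rw [Measure.volumeIoiPow, map_withDensity_comp_s19 _ measurable_subtype_coe
    (g := fun r : ℝ => ENNReal.ofReal (r ^ k)) (by fun_prop),
    map_comap_subtype_coe measurableSet_Ioi]

theorem map_add_sub_volume :
    (volume : Measure (ℝ × ℝ)).map (fun q => (q.1 + q.2, q.1 - q.2)) =
      ENNReal.ofReal (1 / 2) • volume := by
  let A : Matrix (Fin 2) (Fin 2) ℝ := !![1, 1; 1, -1]
  let L := Matrix.toLin (Basis.finTwoProd ℝ) (Basis.finTwoProd ℝ) A
  have hdet : LinearMap.det L = -2 := by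
    rw [LinearMap.det_toLin, Matrix.det_fin_two_of]
    norm_num
  have hL : (fun q : ℝ × ℝ => (q.1 + q.2, q.1 - q.2)) = L := by
    funext q
    simp [L, A, Matrix.toLin_finTwoProd_apply, sub_eq_add_neg]
  rw [hL, Measure.map_linearMap_addHaar_eq_smul_addHaar volume (by norm_num [hdet]), hdet]
  norm_num

theorem map_add_sub_withDensity_snd_pow (k : ℕ) :
    ((volume.restrict {q : ℝ × ℝ | 0 < q.2}).withDensity fun q => ENNReal.ofReal (q.2 ^ k)).map
        (fun q => (q.1 + q.2, q.1 - q.2)) =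
      ENNReal.ofReal (1 / 2 ^ (k + 1)) • (volume.restrict {ξ : ℝ × ℝ | ξ.2 < ξ.1}).withDensity
        fun ξ => ENNReal.ofReal ((ξ.1 - ξ.2) ^ k) := by
  let φ : ℝ × ℝ → ℝ × ℝ := fun q => (q.1 + q.2, q.1 - q.2)
  have hφ : Measurable φ := by fun_prop
  have hset : {q : ℝ × ℝ | 0 < q.2} = φ ⁻¹' {ξ | ξ.2 < ξ.1} := by
    ext q
    simp only [φ, mem_ofPred_eq, mem_preimage]
    constructor <;> intro <;> linarith
  have hdensity : (fun q : ℝ × ℝ => ENNReal.ofReal (q.2 ^ k)) = fun q =>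
      (ENNReal.ofReal (1 / 2 ^ k) • fun ξ : ℝ × ℝ => ENNReal.ofReal ((ξ.1 - ξ.2) ^ k)) (φ q) := by
    funext q
    rw [Pi.smul_apply, smul_eq_mul, ← ENNReal.ofReal_mul (by positivity), one_div_mul_eq_div,
      ← div_pow]
    congr 2
    simp only [φ]
    ring
  rw [hset, hdensity, map_withDensity_comp_s19 _ hφ (by fun_prop),
    ← Measure.restrict_map hφ (measurableSet_lt measurable_snd measurable_fst),
    map_add_sub_volume, Measure.restrict_smul, withDensity_smul_measure,
    withDensity_smul _ (by fun_prop), smul_smul, ← ENNReal.ofReal_mul (by positivity),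
    one_div_mul_one_div, ← pow_succ']

section Radial

variable {E : Type*} [NormedAddCommGroup E] [NormedSpace ℝ E] [Nontrivial E]
  [FiniteDimensional ℝ E] [MeasurableSpace E] [BorelSpace E] (μ : Measure E) [μ.IsAddHaarMeasure]

theorem toSphere_real_univ_pos : 0 < μ.toSphere.real univ :=
  have : NeZero μ.toSphere := ⟨μ.toSphere_ne_zero⟩
  measureReal_univ_pos

theorem map_norm_addHaar :
    μ.map (‖·‖) = μ.toSphere univ •
      (volume.restrict (Ioi 0)).withDensity fun r => ENNReal.ofReal (r ^ (finrank ℝ E - 1)) := by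
  calc
    μ.map (‖·‖) = ((μ.comap (↑)).map ((↑) : ({0}ᶜ : Set E) → E)).map (‖·‖) := by
      rw [map_comap_subtype_coe (measurableSet_singleton 0).compl, restrict_compl_singleton]
    _ = (((μ.comap (↑)).map (homeomorphUnitSphereProd E)).map Prod.snd).map (↑) := by
      rw [Measure.map_map measurable_norm measurable_subtype_coe,
        Measure.map_map measurable_snd (homeomorphUnitSphereProd E).measurable,
        Measure.map_map measurable_subtype_coe
          (measurable_snd.comp (homeomorphUnitSphereProd E).measurable)]
      congr 1 with x
      simp
    _ = _ := by
      rw [μ.measurePreserving_homeomorphUnitSphereProd.map_eq, Measure.map_snd_prod,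
        Measure.map_smul, map_coe_volumeIoiPow]

end Radial

section LorentzEigenvalues

/-- The ordered eigenvalues `(t + ‖x‖, t - ‖x‖)` of the element `(t, x)` of the rank-two Jordan
algebra of the Lorentz cone, whose joint law is sought. -/
def lorentzEigenvalues {E : Type*} [Norm E] (p : ℝ × E) : ℝ × ℝ :=
  (p.1 + ‖p.2‖, p.1 - ‖p.2‖)

/-- The density `exp (-tr / 2) * det ^ a` on the open Lorentz cone, as a function of the
ordered eigenvalues `ξ.1 ≥ ξ.2`: the trace is `ξ.1 + ξ.2`, the determinant is `ξ.1 * ξ.2`, and the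
cone is `0 < ξ.2`. -/
noncomputable def wishartSpectralDensity (a : ℝ) (ξ : ℝ × ℝ) : ℝ≥0∞ :=
  ENNReal.ofReal (if 0 < ξ.2 then Real.exp (-(ξ.1 + ξ.2) / 2) * (ξ.1 * ξ.2) ^ a else 0)

theorem measurable_wishartSpectralDensity (a : ℝ) : Measurable (wishartSpectralDensity a) :=
  (Measurable.ite (measurableSet_lt measurable_const measurable_snd) (by fun_prop)
    measurable_const).ennreal_ofReal

theorem wishartSpectralDensity_lorentzEigenvalues {E : Type*} [Norm E] (a : ℝ) (p : ℝ × E) :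
    wishartSpectralDensity a (lorentzEigenvalues p) =
      ENNReal.ofReal
        (if ‖p.2‖ < p.1 then Real.exp (-p.1) * (p.1 ^ 2 - ‖p.2‖ ^ 2) ^ a else 0) := by
  have htrace : -(p.1 + ‖p.2‖ + (p.1 - ‖p.2‖)) / 2 = -p.1 := by ring
  have hdet : (p.1 + ‖p.2‖) * (p.1 - ‖p.2‖) = p.1 ^ 2 - ‖p.2‖ ^ 2 := by ring
  simp only [wishartSpectralDensity, lorentzEigenvalues, sub_pos, htrace, hdet]

theorem measurable_lorentzEigenvalues {E : Type*} [NormedAddCommGroup E] [MeasurableSpace E]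
    [OpensMeasurableSpace E] : Measurable (lorentzEigenvalues : ℝ × E → ℝ × ℝ) := by
  unfold lorentzEigenvalues
  fun_prop

variable {E : Type*} [NormedAddCommGroup E] [NormedSpace ℝ E] [Nontrivial E]
  [FiniteDimensional ℝ E] [MeasurableSpace E] [BorelSpace E] (μ : Measure E) [μ.IsAddHaarMeasure]

theorem map_prodMap_id_norm_addHaar :
    (volume.prod μ).map (Prod.map id (‖·‖)) =
      μ.toSphere univ • (volume.restrict {q : ℝ × ℝ | 0 < q.2}).withDensity
        fun q => ENNReal.ofReal (q.2 ^ (finrank ℝ E - 1)) := by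
  have hset : {q : ℝ × ℝ | 0 < q.2} = univ ×ˢ Ioi 0 := by ext; simp
  rw [← Measure.map_prod_map _ _ measurable_id measurable_norm, Measure.map_id, map_norm_addHaar,
    Measure.prod_smul_right, prod_withDensity_right (by fun_prop), hset,
    Measure.volume_eq_prod, ← Measure.prod_restrict, Measure.restrict_univ]

theorem map_lorentzEigenvalues_prod_addHaar :
    (volume.prod μ).map lorentzEigenvalues =
      ENNReal.ofReal (μ.toSphere.real univ / 2 ^ finrank ℝ E) •
        (volume.restrict {ξ : ℝ × ℝ | ξ.2 < ξ.1}).withDensity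
          fun ξ => ENNReal.ofReal ((ξ.1 - ξ.2) ^ (finrank ℝ E - 1)) := by
  have hfactor : (lorentzEigenvalues : ℝ × E → ℝ × ℝ) =
      (fun q : ℝ × ℝ => (q.1 + q.2, q.1 - q.2)) ∘ Prod.map id (‖·‖) := rfl
  rw [hfactor, ← Measure.map_map (by fun_prop) (by fun_prop), map_prodMap_id_norm_addHaar,
    Measure.map_smul, map_add_sub_withDensity_snd_pow, smul_smul, Nat.sub_add_cancel finrank_pos,
    ← ofReal_measureReal (μ := μ.toSphere), ← ENNReal.ofReal_mul measureReal_nonneg,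
    mul_one_div]

theorem map_withDensity_comp_lorentzEigenvalues {g : ℝ × ℝ → ℝ≥0∞} (hg : Measurable g) :
    ((volume.prod μ).withDensity fun p => g (lorentzEigenvalues p)).map lorentzEigenvalues =
      volume.withDensity ({ξ : ℝ × ℝ | ξ.2 < ξ.1}.indicator fun ξ =>
        ENNReal.ofReal (μ.toSphere.real univ / 2 ^ finrank ℝ E *
          (ξ.1 - ξ.2) ^ (finrank ℝ E - 1)) * g ξ) := by
  rw [map_withDensity_comp_s19 _ measurable_lorentzEigenvalues hg, map_lorentzEigenvalues_prod_addHaar,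
    ← withDensity_smul _ (by fun_prop), ← withDensity_mul _ (by fun_prop) hg,
    ← withDensity_indicator (measurableSet_lt measurable_snd measurable_fst)]
  congr 2
  funext ξ
  rw [Pi.mul_apply, Pi.smul_apply, smul_eq_mul, ← ENNReal.ofReal_mul (by positivity)]

end LorentzEigenvalues

theorem lorentz_wishart_eigenvalue_density_general {E : Type*} [NormedAddCommGroup E]
    [NormedSpace ℝ E] [Nontrivial E] [FiniteDimensional ℝ E] [MeasurableSpace E] [BorelSpace E]
    (μ : Measure E) [μ.IsAddHaarMeasure] {n : ℕ} (hn : finrank ℝ (ℝ × E) = n) (η : ℝ) :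
    ((volume.prod μ).withDensity
        (fun p => ENNReal.ofReal
          (if ‖p.2‖ < p.1 then
            Real.exp (-p.1) * (p.1 ^ 2 - ‖p.2‖ ^ 2) ^ (η / 2 - (n : ℝ) / 2)
          else 0))).map
      (fun p : ℝ × E => ((p.1 + ‖p.2‖, p.1 - ‖p.2‖) : ℝ × ℝ)) =
    (volume : Measure (ℝ × ℝ)).withDensity fun ξ => ENNReal.ofReal
      (if 0 < ξ.2 ∧ ξ.2 < ξ.1 then
        μ.toSphere.real univ / 2 ^ (n - 1) * Real.exp (-(ξ.1 + ξ.2) / 2) *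
          (ξ.1 * ξ.2) ^ (η / 2 - (n : ℝ) / 2) * (ξ.1 - ξ.2) ^ ((n : ℝ) - 2)
      else 0) := by
  have hdim : finrank ℝ E + 1 = n := by rw [← hn, finrank_prod, finrank_self, add_comm]
  have hpos : 0 < finrank ℝ E := finrank_pos
  have hpow (x : ℝ) : x ^ ((n : ℝ) - 2) = x ^ (finrank ℝ E - 1) := by
    rw [← Real.rpow_natCast, Nat.cast_sub hpos, ← hdim]
    push_cast
    ring_nf
  simp only [← wishartSpectralDensity_lorentzEigenvalues]
  refine (map_withDensity_comp_lorentzEigenvalues μ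
    (measurable_wishartSpectralDensity _)).trans ?_
  congr 1
  funext ξ
  rw [hpow, ← hdim, Nat.add_sub_cancel]
  by_cases horder : ξ.2 < ξ.1
  · have : 0 ≤ ξ.1 - ξ.2 := sub_nonneg.2 horder.le
    simp only [indicator, mem_ofPred_eq, horder, if_true, and_true, wishartSpectralDensity]
    rw [← ENNReal.ofReal_mul (by positivity), mul_ite, mul_zero]
    congr 2
    ring
  · simp [horder]

open Classical in
/-- Joint density of the ordered eigenvalues of the Lorentz Wishart distribution
`𝕃W_n(η, e)`: with `W` the measure on `ℝ × ℝ^{n−1}` with density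
`(t, x) ↦ exp(−t)·(t² − ‖x‖²)^{η/2−n/2}·1_{t > ‖x‖}` with respect to Lebesgue measure,
the pushforward of `W` under the eigenvalue map `(t, x) ↦ (t + ‖x‖, t − ‖x‖)` has density
`(ξ₁, ξ₂) ↦ c · 1_{ξ₁ > ξ₂ > 0} · exp(−(ξ₁+ξ₂)/2) · (ξ₁ξ₂)^{η/2−n/2} · (ξ₁−ξ₂)^{n−2}`
with respect to Lebesgue measure on `ℝ²`, for some constant `c > 0`. -/
theorem lorentz_wishart_eigenvalue_density (n : ℕ) (hn : 2 < n) (η : ℝ)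
    (hη : (n : ℝ) - 2 < η) :
    ∃ c : ℝ, 0 < c ∧
      ((volume : Measure (ℝ × EuclideanSpace ℝ (Fin (n - 1)))).withDensity
          (fun p => ENNReal.ofReal
            (if ‖p.2‖ < p.1 then
              Real.exp (-p.1) * (p.1 ^ 2 - ‖p.2‖ ^ 2) ^ (η / 2 - (n : ℝ) / 2)
            else 0))).map
        (fun p : ℝ × EuclideanSpace ℝ (Fin (n - 1)) => ((p.1 + ‖p.2‖, p.1 - ‖p.2‖) : ℝ × ℝ)) =
      (volume : Measure (ℝ × ℝ)).withDensity fun ξ => ENNReal.ofReal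
        (if 0 < ξ.2 ∧ ξ.2 < ξ.1 then
          c * Real.exp (-(ξ.1 + ξ.2) / 2) * (ξ.1 * ξ.2) ^ (η / 2 - (n : ℝ) / 2) *
            (ξ.1 - ξ.2) ^ ((n : ℝ) - 2)
        else 0) := by
  have : Nontrivial (EuclideanSpace ℝ (Fin (n - 1))) :=
    nontrivial_of_finrank_pos (R := ℝ) (by rw [finrank_euclideanSpace_fin]; omega)
  exact ⟨_, div_pos (toSphere_real_univ_pos _) (by positivity),
    lorentz_wishart_eigenvalue_density_general volume
      (by rw [finrank_prod, finrank_self, finrank_euclideanSpace_fin]; omega) η⟩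
end
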